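/- arXiv:2408.03973 — 12 statements merged into one kernel-verified Lean document; each statement's English description precedes it below -/
import Mathlib

section
/- Let ψ ∈ 𝒟₁ (so ψ is concave, strictly increasing, differentiable, unbounded on (0,∞)), and let {c_n} be a non-negative non-increasing real sequence tending to zero such that liminf_{n→∞} ψ(n)·c_n > 0. If A ⊆ ℕ is an infinite set such that the sub-series Σ_{n=1}^∞ χ_A(n)·c_n converges, then the asymptotic ψ-density of A is zero, i.e. lim_{n→∞} A_ψ(n)/ψ(n) = 0. -/
open Filter

/-- The class 𝒟 of strictly increasing, differentiable, unbounded functions on (0,∞). -/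
def memD (ψ : ℝ → ℝ) : Prop :=
  StrictMonoOn ψ (Set.Ioi 0) ∧ (∀ x ∈ Set.Ioi (0:ℝ), 0 < ψ x) ∧
    (∀ x ∈ Set.Ioi (0:ℝ), DifferentiableAt ℝ ψ x) ∧ Tendsto ψ atTop atTop

/-- The class 𝒟₁ of concave functions in 𝒟. -/
def memD1 (ψ : ℝ → ℝ) : Prop := memD ψ ∧ ConcaveOn ℝ (Set.Ioi 0) ψ

/-- The class 𝒟₂ of convex functions in 𝒟 with ψ(n+1)/ψ(n) → 1. -/
def memD2 (ψ : ℝ → ℝ) : Prop :=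
  memD ψ ∧ ConvexOn ℝ (Set.Ioi 0) ψ ∧
    Tendsto (fun n : ℕ => ψ (n + 1) / ψ n) atTop (nhds 1)

/-- A_ψ(n) = ∑_{k=1}^n ψ'(k) · χ_A(k). -/
noncomputable def Apsi (ψ : ℝ → ℝ) (A : Set ℕ) (n : ℕ) : ℝ :=
  ∑ k ∈ Finset.Icc 1 n, deriv ψ (k : ℝ) * A.indicator (fun _ => (1 : ℝ)) k

/-- ∑_{k=1}^n ψ'(k). -/
noncomputable def Spsi (ψ : ℝ → ℝ) (n : ℕ) : ℝ :=
  ∑ k ∈ Finset.Icc 1 n, deriv ψ (k : ℝ)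

/-!
The proof is a dominated-convergence form of Kronecker's lemma: if `∑ aₖ / bₖ` converges absolutely
and `bₖ` increases to infinity, then `(∑_{k ≤ n} aₖ) / bₙ → 0`. It is applied to `aₖ = ψ'(k) χ_A(k)`
and `bₖ = ψ(k)`. Concavity makes `ψ'` bounded, so the lower bound on `ψ(k) cₖ` gives
`ψ'(k) = O(ψ(k) cₖ)`, and `∑ aₖ / bₖ` is dominated by the convergent sub-series `∑ χ_A(k) cₖ`.
-/

open Asymptotics Topology

theorem tendsto_inv_smul_sum_Icc_of_summable_norm {E : Type*} [NormedAddCommGroup E]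
    [NormedSpace ℝ E] [CompleteSpace E] {a : ℕ → E} {b : ℕ → ℝ} {m : ℕ}
    (hb_pos : ∀ k, m ≤ k → 0 < b k) (hb_mono : MonotoneOn b (Set.Ici m))
    (hb_top : Tendsto b atTop atTop) (hab : Summable fun k ↦ ‖(b k)⁻¹ • a k‖) :
    Tendsto (fun n ↦ (b n)⁻¹ • ∑ k ∈ Finset.Icc m n, a k) atTop (𝓝 0) := by
  have sum_eq_tsum (n : ℕ) : (b n)⁻¹ • ∑ k ∈ Finset.Icc m n, a k =
      ∑' k, (Finset.Icc m n : Set ℕ).indicator (fun k ↦ (b n)⁻¹ • a k) k := by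
    rw [Finset.smul_sum, sum_eq_tsum_indicator]
  have term_tendsto (k : ℕ) : Tendsto
      (fun n ↦ (Finset.Icc m n : Set ℕ).indicator (fun k ↦ (b n)⁻¹ • a k) k) atTop (𝓝 0) := by
    have smul_tendsto : Tendsto (fun n ↦ (b n)⁻¹ • a k) atTop (𝓝 0) := by
      simpa only [zero_smul, Pi.inv_apply] using hb_top.inv_tendsto_atTop.smul_const (a k)
    exact squeeze_zero_norm (fun n ↦ norm_indicator_le_norm_self _ _)
      (tendsto_zero_iff_norm_tendsto_zero.1 smul_tendsto)
  have term_le (n k : ℕ) : ‖(Finset.Icc m n : Set ℕ).indicator (fun k ↦ (b n)⁻¹ • a k) k‖ ≤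
      ‖(b k)⁻¹ • a k‖ := by
    by_cases hk : k ∈ Finset.Icc m n
    · obtain ⟨hmk, hkn⟩ := Finset.mem_Icc.1 hk
      have hbk := hb_pos k hmk
      have hbkn : b k ≤ b n := hb_mono hmk (hmk.trans hkn) hkn
      rw [Set.indicator_of_mem (Finset.mem_coe.2 hk), norm_smul, norm_smul, norm_inv, norm_inv,
        Real.norm_of_nonneg hbk.le, Real.norm_of_nonneg (hbk.le.trans hbkn)]
      gcongr
    · rw [Set.indicator_of_notMem (Finset.mem_coe.not.2 hk), norm_zero]
      exact norm_nonneg _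
  simpa only [sum_eq_tsum, tsum_zero] using
    tendsto_tsum_of_dominated_convergence hab term_tendsto (.of_forall term_le)

theorem isBigO_deriv_one_of_concaveOn_of_monotoneOn {f : ℝ → ℝ} {a : ℝ}
    (hf_conc : ConcaveOn ℝ (Set.Ioi a) f) (hf_mono : MonotoneOn f (Set.Ioi a))
    (hf_diff : ∀ x ∈ Set.Ioi a, DifferentiableAt ℝ f x) :
    deriv f =O[atTop] fun _ ↦ (1 : ℝ) := by
  have deriv_nonneg : ∀ x ∈ Set.Ioi a, 0 ≤ deriv f x := fun x hx ↦ by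
    rw [← derivWithin_of_isOpen isOpen_Ioi hx]
    exact hf_mono.derivWithin_nonneg
  have deriv_anti : AntitoneOn (deriv f) (Set.Ioi a) := hf_conc.antitoneOn_deriv hf_diff
  have ha : a + 1 ∈ Set.Ioi a := lt_add_one a
  refine IsBigO.of_bound (deriv f (a + 1)) ?_
  filter_upwards [eventually_ge_atTop (a + 1)] with x hx
  have hxa : x ∈ Set.Ioi a := ha.trans_le hx
  rw [Real.norm_of_nonneg (deriv_nonneg x hxa), norm_one, mul_one]
  exact deriv_anti ha hxa hx

theorem memD.apply_natCast_pos {ψ : ℝ → ℝ} (hψ : memD ψ) {k : ℕ} (hk : 1 ≤ k) : 0 < ψ k :=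
  hψ.2.1 k (Set.mem_Ioi.2 (Nat.cast_pos.2 hk))

theorem memD.monotoneOn_comp_natCast {ψ : ℝ → ℝ} (hψ : memD ψ) :
    MonotoneOn (fun k : ℕ ↦ ψ k) (Set.Ici 1) := fun _ hj _ hk hjk ↦
  hψ.1.monotoneOn (Set.mem_Ioi.2 (Nat.cast_pos.2 hj)) (Set.mem_Ioi.2 (Nat.cast_pos.2 hk))
    (Nat.cast_le.2 hjk)

theorem memD.tendsto_comp_natCast {ψ : ℝ → ℝ} (hψ : memD ψ) :
    Tendsto (fun k : ℕ ↦ ψ k) atTop atTop :=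
  hψ.2.2.2.comp tendsto_natCast_atTop_atTop

theorem memD.summable_inv_smul_deriv_mul_indicator {ψ : ℝ → ℝ} (hψ : memD ψ) {c : ℕ → ℝ}
    (hc : (fun k : ℕ ↦ deriv ψ k) =O[atTop] fun k ↦ ψ k * c k) {A : Set ℕ}
    (hA : Summable (A.indicator c)) :
    Summable fun k : ℕ ↦ (ψ k)⁻¹ • (deriv ψ k * A.indicator (fun _ ↦ (1 : ℝ)) k) := by
  have isBigO_mul_indicator :
      (fun k : ℕ ↦ (ψ k)⁻¹ • (deriv ψ k * A.indicator (fun _ ↦ (1 : ℝ)) k)) =O[atTop]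
        fun k ↦ (ψ k)⁻¹ • (ψ k * c k * A.indicator (fun _ ↦ (1 : ℝ)) k) :=
    (isBigO_refl _ _).smul (hc.mul (isBigO_refl _ _))
  have eventuallyEq_indicator :
      (fun k : ℕ ↦ (ψ k)⁻¹ • (ψ k * c k * A.indicator (fun _ ↦ (1 : ℝ)) k)) =ᶠ[atTop]
        A.indicator c := by
    filter_upwards [eventually_ge_atTop 1] with k hk
    have hψk : ψ k ≠ 0 := (hψ.apply_natCast_pos hk).ne'
    rw [smul_eq_mul, mul_assoc, inv_mul_cancel_left₀ hψk, ← Set.indicator_mul_right A c]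
    simp only [mul_one]
  exact summable_of_isBigO_nat hA (isBigO_mul_indicator.trans_eventuallyEq eventuallyEq_indicator)

theorem memD1.isBigO_deriv_of_le_mul {ψ : ℝ → ℝ} (hψ : memD1 ψ) {c : ℕ → ℝ} {δ : ℝ} (hδ : 0 < δ)
    (hc : ∀ᶠ k : ℕ in atTop, δ ≤ ψ k * c k) :
    (fun k : ℕ ↦ deriv ψ k) =O[atTop] fun k ↦ ψ k * c k := by
  have deriv_bounded : (fun k : ℕ ↦ deriv ψ k) =O[atTop] fun _ ↦ (1 : ℝ) :=
    (isBigO_deriv_one_of_concaveOn_of_monotoneOn hψ.2 hψ.1.1.monotoneOn hψ.1.2.2.1).comp_tendsto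
      tendsto_natCast_atTop_atTop
  have one_isBigO : (fun _ ↦ (1 : ℝ)) =O[atTop] fun k : ℕ ↦ ψ k * c k := by
    refine IsBigO.of_bound δ⁻¹ ?_
    filter_upwards [hc] with k hk
    rw [norm_one, Real.norm_of_nonneg (hδ.le.trans hk), inv_mul_eq_div]
    exact (one_le_div hδ).2 hk
  exact deriv_bounded.trans one_isBigO

theorem stmt0_general {ψ : ℝ → ℝ} (hψ : memD ψ) {c : ℕ → ℝ}
    (hc : (fun k : ℕ ↦ deriv ψ k) =O[atTop] fun k ↦ ψ k * c k) {A : Set ℕ}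
    (hA : Summable (A.indicator c)) :
    Tendsto (fun n : ℕ ↦ Apsi ψ A n / ψ n) atTop (𝓝 0) := by
  simpa only [Apsi, div_eq_inv_mul, smul_eq_mul] using
    tendsto_inv_smul_sum_Icc_of_summable_norm (fun _ ↦ hψ.apply_natCast_pos)
      hψ.monotoneOn_comp_natCast hψ.tendsto_comp_natCast
      (hψ.summable_inv_smul_deriv_mul_indicator hc hA).norm

/-- ψ ∈ 𝒟₁, c nonneg non-increasing → 0 with liminf ψ(n)c_n > 0;
if Σ χ_A(n) c_n converges then the asymptotic ψ-density of A is 0. -/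
theorem stmt0 (ψ : ℝ → ℝ) (hψ : memD1 ψ) (c : ℕ → ℝ)
    (hc_nonneg : ∀ n : ℕ, 1 ≤ n → 0 ≤ c n)
    (hc_mono : ∀ n : ℕ, 1 ≤ n → c (n + 1) ≤ c n)
    (hc_zero : Tendsto c atTop (nhds 0))
    (hliminf : ∃ δ > (0:ℝ), ∀ᶠ n : ℕ in atTop, δ ≤ ψ n * c n)
    (A : Set ℕ) (hA : A.Infinite)
    (hconv : Summable (fun n => A.indicator c n)) :
    Tendsto (fun n : ℕ => Apsi ψ A n / ψ n) atTop (nhds 0) := by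
  obtain ⟨δ, hδ, hδc⟩ := hliminf
  exact stmt0_general hψ.1 (hψ.isBigO_deriv_of_le_mul hδ hδc) hconv
end

section
/- Let ψ ∈ 𝒟₂ (so ψ is convex, strictly increasing, differentiable, unbounded on (0,∞), with ψ(n+1)/ψ(n) → 1 as n → ∞), and let {c_n} be a non-negative non-increasing real sequence tending to zero such that liminf_{n→∞} (ψ(n)/ψ'(n))·c_n > 0. If A ⊆ ℕ is an infinite set such that the sub-series Σ_{n=1}^∞ χ_A(n)·c_n converges, then the asymptotic ψ-density of A is zero, i.e. lim_{n→∞} A_ψ(n)/ψ(n) = 0. -/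
open Filter

/-!
The conclusion is an instance of Kronecker's lemma: if `∑ xₖ` converges absolutely and `bₙ`
increases to `∞`, then `(∑_{k ≤ n} bₖ xₖ) / bₙ → 0`, because the `k`-th term is dominated by `|xₖ|`
and tends to `0`. Take `bₖ = ψ(k)` and `xₖ = χ_A(k) ψ'(k) / ψ(k)`; the liminf hypothesis gives
`ψ'(k) / ψ(k) = O(cₖ)`, so `∑ xₖ` converges absolutely by comparison with `∑ χ_A(k) cₖ`.
-/

open Asymptotics Topology

theorem isBigO_indicator {α E F : Type*} [SeminormedAddCommGroup E] [SeminormedAddCommGroup F]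
    {l : Filter α} {f : α → E} {g : α → F} (h : f =O[l] g) (s : Set α) :
    s.indicator f =O[l] s.indicator g := by
  obtain ⟨C, hC⟩ := h.bound
  refine IsBigO.of_bound C ?_
  filter_upwards [hC] with a ha
  by_cases has : a ∈ s <;> simp [has, ha]

theorem isBigO_inv_of_isBigO_one_mul {α 𝕜 : Type*} [NormedField 𝕜] {l : Filter α} {u c : α → 𝕜}
    (h : (1 : α → 𝕜) =O[l] (u * c)) : u⁻¹ =O[l] c := by
  have h_mul : (u⁻¹ * 1) =O[l] (u⁻¹ * (u * c)) := (isBigO_refl u⁻¹ l).mul h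
  have h_cancel : (u⁻¹ * (u * c)) =O[l] c := by
    refine isBigO_of_le l fun a => ?_
    by_cases hu : u a = 0 <;> simp [hu]
  simpa only [mul_one] using h_mul.trans h_cancel

theorem abs_le_of_monotoneOn_Ici {ι : Type*} [Preorder ι] {b : ι → ℝ} {m k n : ι}
    (hb : MonotoneOn b (Set.Ici m)) (hmk : m ≤ k) (hkn : k ≤ n) (hn : -b m ≤ b n) :
    |b k| ≤ b n :=
  abs_le.2 ⟨(neg_le.1 hn).trans (hb Set.self_mem_Ici hmk hmk), hb hmk (hmk.trans hkn) hkn⟩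

theorem tendsto_inv_smul_sum_Icc_smul_of_summable_norm {ι E : Type*} [Preorder ι]
    [LocallyFiniteOrder ι] [NormedAddCommGroup E] [NormedSpace ℝ E] [CompleteSpace E]
    {b : ι → ℝ} {m : ι} {x : ι → E} (hb : MonotoneOn b (Set.Ici m))
    (hb_top : Tendsto b atTop atTop) (hx : Summable fun k => ‖x k‖) :
    Tendsto (fun n => (b n)⁻¹ • ∑ k ∈ Finset.Icc m n, b k • x k) atTop (𝓝 0) := by
  let term (n : ι) : ι → E := (Finset.Icc m n : Set ι).indicator fun k => (b k / b n) • x k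
  have tsum_term (n : ι) : ∑' k, term n k = (b n)⁻¹ • ∑ k ∈ Finset.Icc m n, b k • x k := by
    rw [← sum_eq_tsum_indicator, Finset.smul_sum]
    exact Finset.sum_congr rfl fun k _ => by rw [smul_smul, div_eq_inv_mul]
  have tendsto_term (k : ι) : Tendsto (fun n => term n k) atTop (𝓝 0) := by
    refine squeeze_zero_norm (fun n => norm_indicator_le_norm_self _ k) ?_
    simpa using ((hb_top.const_div_atTop (b k)).smul_const (x k)).norm
  have norm_term_le : ∀ᶠ n in atTop, ∀ k, ‖term n k‖ ≤ ‖x k‖ := by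
    filter_upwards [hb_top.eventually_ge_atTop (-b m), hb_top.eventually_gt_atTop 0]
      with n hn hn_pos k
    by_cases hk : k ∈ (Finset.Icc m n : Set ι)
    · obtain ⟨hmk, hkn⟩ := Finset.mem_Icc.1 hk
      have ratio_le_one : |b k| / |b n| ≤ 1 := by
        rw [abs_of_pos hn_pos]
        exact div_le_one_of_le₀ (abs_le_of_monotoneOn_Ici hb hmk hkn hn) hn_pos.le
      calc ‖term n k‖ = |b k| / |b n| * ‖x k‖ := by
            simp only [term, Set.indicator_of_mem hk, norm_smul, norm_div, Real.norm_eq_abs]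
        _ ≤ ‖x k‖ := mul_le_of_le_one_left (norm_nonneg _) ratio_le_one
    · simp only [term, Set.indicator_of_notMem hk, norm_zero, norm_nonneg]
  simpa only [tsum_term, tsum_zero] using
    tendsto_tsum_of_dominated_convergence hx tendsto_term norm_term_le

theorem tendsto_sum_mul_indicator_div_of_summable {b w c : ℕ → ℝ} {m : ℕ} {A : Set ℕ}
    (hb : MonotoneOn b (Set.Ici m)) (hb_pos : 0 < b m) (hb_top : Tendsto b atTop atTop)
    (hc : (1 : ℕ → ℝ) =O[atTop] (b / w * c)) (hconv : Summable (A.indicator c)) :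
    Tendsto (fun n => (∑ k ∈ Finset.Icc m n, w k * A.indicator (fun _ => 1) k) / b n)
      atTop (𝓝 0) := by
  have ratio_isBigO : (w / b) =O[atTop] c := by
    simpa only [inv_div] using isBigO_inv_of_isBigO_one_mul hc
  have ratio_summable : Summable (A.indicator (w / b)) :=
    summable_of_isBigO_nat' hconv (isBigO_indicator ratio_isBigO A)
  have sum_eq (n : ℕ) : ∑ k ∈ Finset.Icc m n, b k * A.indicator (w / b) k =
      ∑ k ∈ Finset.Icc m n, w k * A.indicator (fun _ => 1) k := by
    refine Finset.sum_congr rfl fun k hk => ?_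
    have hmk : m ≤ k := (Finset.mem_Icc.1 hk).1
    have hbk : b k ≠ 0 := (hb_pos.trans_le (hb Set.self_mem_Ici hmk hmk)).ne'
    by_cases hkA : k ∈ A <;> simp [hkA, mul_div_cancel₀ _ hbk]
  simpa only [sum_eq, smul_eq_mul, ← div_eq_inv_mul] using
    tendsto_inv_smul_sum_Icc_smul_of_summable_norm hb hb_top ratio_summable.norm

theorem stmt1_general (ψ : ℝ → ℝ) (hψ : memD ψ) (c : ℕ → ℝ)
    (hliminf : ∃ δ > (0 : ℝ), ∀ᶠ n : ℕ in atTop, δ ≤ ψ n / deriv ψ n * c n)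
    (A : Set ℕ) (hconv : Summable (A.indicator c)) :
    Tendsto (fun n : ℕ => Apsi ψ A n / ψ n) atTop (𝓝 0) := by
  obtain ⟨ψ_strictMono, ψ_pos, -, ψ_top⟩ := hψ
  have cast_pos {n : ℕ} (hn : 1 ≤ n) : (n : ℝ) ∈ Set.Ioi 0 :=
    Set.mem_Ioi.2 (Nat.cast_pos.2 hn)
  have ψ_natCast_mono : MonotoneOn (fun n : ℕ => ψ n) (Set.Ici 1) := fun _ hk _ hn hkn =>
    ψ_strictMono.monotoneOn (cast_pos hk) (cast_pos hn) (Nat.cast_le.2 hkn)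
  obtain ⟨δ, hδ, h_le⟩ := hliminf
  have one_isBigO : (1 : ℕ → ℝ) =O[atTop] fun n : ℕ => ψ n / deriv ψ n * c n :=
    (isBigO_const_left_iff_pos_le_norm one_ne_zero).2
      ⟨δ, hδ, h_le.mono fun _ hn => hn.trans (Real.le_norm_self _)⟩
  exact tendsto_sum_mul_indicator_div_of_summable ψ_natCast_mono (ψ_pos _ (cast_pos le_rfl))
    (ψ_top.comp tendsto_natCast_atTop_atTop) one_isBigO hconv

/-- ψ ∈ 𝒟₂, c nonneg non-increasing → 0 with liminf (ψ(n)/ψ'(n))c_n > 0;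
if Σ χ_A(n) c_n converges then the asymptotic ψ-density of A is 0. -/
theorem stmt1 (ψ : ℝ → ℝ) (hψ : memD2 ψ) (c : ℕ → ℝ)
    (hc_nonneg : ∀ n : ℕ, 1 ≤ n → 0 ≤ c n)
    (hc_mono : ∀ n : ℕ, 1 ≤ n → c (n + 1) ≤ c n)
    (hc_zero : Tendsto c atTop (nhds 0))
    (hliminf : ∃ δ > (0:ℝ), ∀ᶠ n : ℕ in atTop, δ ≤ ψ n / deriv ψ n * c n)
    (A : Set ℕ) (hA : A.Infinite)
    (hconv : Summable (fun n => A.indicator c n)) :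
    Tendsto (fun n : ℕ => Apsi ψ A n / ψ n) atTop (nhds 0) :=
  stmt1_general ψ hψ.1 c hliminf A hconv
end

section
/- For every δ ∈ (0,1], there exist a set A ⊆ ℕ and a non-negative non-increasing real sequence {c_n} such that the upper linear density of A equals δ, the lower linear density of A equals 0, the series Σ_{n=1}^∞ c_n diverges, and the sub-series Σ_{n=1}^∞ χ_A(n)·c_n converges. -/
open Filter

/-- A(n) = ∑_{k=1}^n χ_A(k). -/
noncomputable def Acount (A : Set ℕ) (n : ℕ) : ℝ :=
  ∑ k ∈ Finset.Icc 1 n, A.indicator (fun _ => (1 : ℝ)) k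

/-!
Let `N k = 2 ^ 4 ^ k`, so that `N (k + 1) = N k ^ 4`, and let `⌈n⌉` be the least `N k` that is at
least `n`. The sequence `c n = 1 / ⌈n⌉` is non-increasing and `n * c n = 1` at `n = N k`, so `∑ c n`
diverges by Cauchy condensation. On the set `S` of positive `n` with `n ^ 2 ≤ ⌈n⌉` we have
`c n ≤ 1 / n ^ 2`, so `∑ c n` over any subset of `S` converges. Now `S` contains `(N k, N k ^ 2]`
and misses `(N k ^ 2, N (k + 1)]`, and in both intervals the left end is negligible compared with
the right end. Hence, if `B` has density `δ`, the ratio `A(n) / n` for `A = B ∩ S` is close to `δ`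
at `n = N k ^ 2` and close to `0` at `n = N (k + 1)`. For `B` take the Beatty-type set with
`B(n) = ⌊δ n⌋`.
-/

open Topology

section LimsupLiminf

variable {α ι γ : Type*} [ConditionallyCompleteLinearOrder γ] [TopologicalSpace γ] [OrderTopology γ]
  {f : Filter α} {g : Filter ι} [NeBot g] {u v : α → γ} {φ : ι → α} {a : γ}

lemma limsup_eq_of_le_of_tendsto_comp (huv : u ≤ᶠ[f] v) (hv : Tendsto v f (𝓝 a))
    (hφ : Tendsto φ g f) (huφ : Tendsto (u ∘ φ) g (𝓝 a)) : limsup u f = a := by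
  have : NeBot f := hφ.neBot
  have hcobdd : (map φ g).IsCoboundedUnder (· ≤ ·) u := huφ.isCoboundedUnder_le
  refine le_antisymm ?_ ?_
  · rw [← hv.limsup_eq]
    exact limsup_le_limsup huv (hcobdd.mono (map_mono hφ)) hv.isBoundedUnder_le
  · rw [← huφ.limsup_eq]
    exact hφ.limsup_comp_le_limsup hcobdd (hv.isBoundedUnder_le.mono_le huv)

lemma liminf_eq_of_le_of_tendsto_comp (hvu : v ≤ᶠ[f] u) (hv : Tendsto v f (𝓝 a))
    (hφ : Tendsto φ g f) (huφ : Tendsto (u ∘ φ) g (𝓝 a)) : liminf u f = a :=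
  limsup_eq_of_le_of_tendsto_comp (γ := γᵒᵈ) hvu hv hφ huφ

end LimsupLiminf

lemma tendsto_natCast_div_sq {ι : Type*} {l : Filter ι} {m : ι → ℕ} (hm : Tendsto m l atTop) :
    Tendsto (fun i => (m i : ℝ) / (m i ^ 2 : ℕ)) l (𝓝 0) := by
  simp only [pow_two, Nat.cast_mul, div_self_mul_self']
  exact tendsto_inv_atTop_nhds_zero_nat.comp hm

section Acount

variable {A B : Set ℕ}

lemma Acount_zero (A : Set ℕ) : Acount A 0 = 0 := by simp [Acount]

lemma Acount_empty (n : ℕ) : Acount ∅ n = 0 := by simp [Acount]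

lemma Acount_succ (A : Set ℕ) (n : ℕ) :
    Acount A (n + 1) = Acount A n + A.indicator (fun _ => (1 : ℝ)) (n + 1) :=
  Finset.sum_Icc_succ_top (Nat.le_add_left 1 n) _

open Classical in
lemma Acount_eq_card_filter (A : Set ℕ) (n : ℕ) :
    Acount A n = ((Finset.Icc 1 n).filter (· ∈ A)).card := by
  simp only [Acount, Set.indicator_apply, Finset.sum_boole]

lemma Acount_nonneg (A : Set ℕ) (n : ℕ) : 0 ≤ Acount A n := by
  classical
  rw [Acount_eq_card_filter]
  positivity

lemma Acount_le_Acount_add {m n : ℕ} (h : ∀ k ∈ Set.Ioc m n, k ∈ B → k ∈ A) :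
    Acount B n ≤ Acount A n + m := by
  classical
  have hsub : (Finset.Icc 1 n).filter (· ∈ B) ⊆
      (Finset.Icc 1 n).filter (· ∈ A) ∪ Finset.Icc 1 m := by
    intro k hk
    simp only [Finset.mem_filter, Finset.mem_union, Finset.mem_Icc] at hk ⊢
    rcases le_or_gt k m with hkm | hmk
    · exact Or.inr ⟨hk.1.1, hkm⟩
    · exact Or.inl ⟨hk.1, h k ⟨hmk, hk.1.2⟩ hk.2⟩
  have hcard := (Finset.card_le_card hsub).trans (Finset.card_union_le _ _)
  rw [Nat.card_Icc, Nat.add_sub_cancel] at hcard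
  simp only [Acount_eq_card_filter]
  exact_mod_cast hcard

lemma Acount_mono (h : A ⊆ B) (n : ℕ) : Acount A n ≤ Acount B n := by
  simpa using Acount_le_Acount_add (m := 0) (n := n) fun k _ hk => h hk

lemma abs_Acount_sub_Acount_le {m n : ℕ} (h : ∀ k ∈ Set.Ioc m n, (k ∈ A ↔ k ∈ B)) :
    |Acount A n - Acount B n| ≤ m := by
  rw [abs_sub_le_iff, sub_le_iff_le_add', sub_le_iff_le_add']
  exact ⟨Acount_le_Acount_add fun k hk => (h k hk).1, Acount_le_Acount_add fun k hk => (h k hk).2⟩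

lemma tendsto_Acount_div_of_eq_on_Ioc {ι : Type*} {l : Filter ι} {m n : ι → ℕ} {d : ℝ}
    (hmn : Tendsto (fun i => (m i : ℝ) / n i) l (𝓝 0))
    (hAB : ∀ i, ∀ k ∈ Set.Ioc (m i) (n i), (k ∈ A ↔ k ∈ B))
    (hB : Tendsto (fun i => Acount B (n i) / n i) l (𝓝 d)) :
    Tendsto (fun i => Acount A (n i) / n i) l (𝓝 d) := by
  have hdiff : Tendsto (fun i => Acount A (n i) / n i - Acount B (n i) / n i) l (𝓝 0) := by
    refine squeeze_zero_norm (fun i => ?_) hmn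
    rw [Real.norm_eq_abs, ← sub_div, abs_div, Nat.abs_cast]
    gcongr
    exact abs_Acount_sub_Acount_le (hAB i)
  simpa using hdiff.add hB

end Acount

section JumpSet

/-- The set of places where `f : ℕ → ℕ` increases. For `f n = ⌊δ n⌋` it is a Beatty-type set of
density `δ`. Truncated subtraction keeps `0` out of it. -/
def jumpSet (f : ℕ → ℕ) : Set ℕ := {n | f (n - 1) < f n}

lemma Acount_jumpSet {f : ℕ → ℕ} (hzero : f 0 = 0) (hmono : Monotone f)
    (hstep : ∀ n, f (n + 1) ≤ f n + 1) (n : ℕ) : Acount (jumpSet f) n = f n := by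
  induction n with
  | zero => simp [Acount_zero, hzero]
  | succ n ih =>
    rw [Acount_succ, ih]
    by_cases hjump : f n < f (n + 1)
    · have hmem : n + 1 ∈ jumpSet f := hjump
      rw [Set.indicator_of_mem hmem]
      exact_mod_cast (Nat.succ_le_of_lt hjump).antisymm (hstep n)
    · have hnotMem : n + 1 ∉ jumpSet f := hjump
      rw [Set.indicator_of_notMem hnotMem, add_zero]
      exact_mod_cast (hmono n.le_succ).antisymm (not_lt.mp hjump)

lemma Acount_jumpSet_floor {δ : ℝ} (hδ : δ ∈ Set.Icc (0 : ℝ) 1) (n : ℕ) :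
    Acount (jumpSet fun n => ⌊δ * n⌋₊) n = ⌊δ * n⌋₊ := by
  refine Acount_jumpSet (by simp) (fun m n hmn => ?_) (fun n => ?_) n
  · exact Nat.floor_mono (mul_le_mul_of_nonneg_left (by exact_mod_cast hmn) hδ.1)
  · rw [← Nat.floor_add_one (mul_nonneg hδ.1 n.cast_nonneg)]
    apply Nat.floor_mono
    push_cast
    linarith [hδ.2]

lemma tendsto_Acount_jumpSet_floor_div {δ : ℝ} (hδ : δ ∈ Set.Icc (0 : ℝ) 1) :
    Tendsto (fun n : ℕ => Acount (jumpSet fun n => ⌊δ * n⌋₊) n / n) atTop (𝓝 δ) := by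
  simp only [Acount_jumpSet_floor hδ]
  exact (tendsto_nat_floor_mul_div_atTop hδ.1).comp tendsto_natCast_atTop_atTop

end JumpSet

section Scale

/-- The doubly exponential scale `N k` against which the sequence and the set are built, chosen so
that `N (k + 1) = N k ^ 4`. -/
def scale (k : ℕ) : ℕ := 2 ^ 4 ^ k

/-- The least value of `scale` that is at least `n`; its reciprocal is the sequence `c n`. -/
def scaleCeil (n : ℕ) : ℕ := scale (Nat.clog 4 (Nat.clog 2 n))

/-- The set of positive `n` that are at most the square root of the scale value above them. It
consists of `1` and the intervals `(N k, N k ^ 2]`. -/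
def farBelowScale : Set ℕ := {n | 0 < n ∧ n ^ 2 ≤ scaleCeil n}

lemma scale_strictMono : StrictMono scale :=
  (pow_right_strictMono₀ one_lt_two).comp (pow_right_strictMono₀ (by norm_num))

lemma scale_pos (k : ℕ) : 0 < scale k := Nat.two_pow_pos _

lemma scale_succ (k : ℕ) : scale (k + 1) = (scale k ^ 2) ^ 2 := by
  simp only [scale, ← pow_mul]
  ring_nf

lemma tendsto_scale : Tendsto scale atTop atTop := scale_strictMono.tendsto_atTop

lemma tendsto_scale_sq : Tendsto (fun k => scale k ^ 2) atTop atTop :=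
  (tendsto_pow_atTop two_ne_zero).comp tendsto_scale

lemma scaleCeil_le_scale_iff {n k : ℕ} : scaleCeil n ≤ scale k ↔ n ≤ scale k := by
  rw [scaleCeil, scale_strictMono.le_iff_le, Nat.clog_le_iff_le_pow (by norm_num),
    Nat.clog_le_iff_le_pow one_lt_two, scale]

lemma scale_succ_le_scaleCeil {n k : ℕ} (h : scale k < n) : scale (k + 1) ≤ scaleCeil n := by
  rw [← not_le, ← scaleCeil_le_scale_iff, not_le, scaleCeil, scale_strictMono.lt_iff_lt] at h
  exact scale_strictMono.monotone h

lemma scaleCeil_scale (k : ℕ) : scaleCeil (scale k) = scale k :=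
  (scaleCeil_le_scale_iff.mpr le_rfl).antisymm (scaleCeil_le_scale_iff.mp le_rfl)

lemma scaleCeil_pos (n : ℕ) : 0 < scaleCeil n := scale_pos _

lemma scaleCeil_monotone : Monotone scaleCeil := fun _ _ h =>
  scale_strictMono.monotone (Nat.clog_monotone 4 (Nat.clog_monotone 2 h))

lemma mem_farBelowScale_of_mem_Ioc {n k : ℕ} (h : n ∈ Set.Ioc (scale k) (scale k ^ 2)) :
    n ∈ farBelowScale := by
  refine ⟨(scale_pos k).trans h.1, ?_⟩
  calc n ^ 2 ≤ (scale k ^ 2) ^ 2 := Nat.pow_le_pow_left h.2 2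
    _ = scale (k + 1) := (scale_succ k).symm
    _ ≤ scaleCeil n := scale_succ_le_scaleCeil h.1

lemma notMem_farBelowScale_of_mem_Ioc {n k : ℕ}
    (h : n ∈ Set.Ioc (scale k ^ 2) (scale (k + 1))) : n ∉ farBelowScale := by
  refine fun hn => hn.2.not_gt ?_
  calc scaleCeil n ≤ scale (k + 1) := scaleCeil_le_scale_iff.mpr h.2
    _ = (scale k ^ 2) ^ 2 := scale_succ k
    _ < n ^ 2 := Nat.pow_lt_pow_left h.1 two_ne_zero

end Scale

section InvScaleCeil

lemma inv_scaleCeil_antitone : Antitone fun n => (scaleCeil n : ℝ)⁻¹ := fun m _ h =>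
  inv_anti₀ (by exact_mod_cast scaleCeil_pos m) (by exact_mod_cast scaleCeil_monotone h)

lemma not_summable_inv_scaleCeil : ¬ Summable fun n => (scaleCeil n : ℝ)⁻¹ := by
  intro hsum
  have hcondensed : Summable fun k : ℕ => (2 : ℝ) ^ k * (scaleCeil (2 ^ k) : ℝ)⁻¹ :=
    (summable_condensed_iff_of_nonneg (fun _ => by positivity)
      fun _ _ _ h => inv_scaleCeil_antitone h).mpr hsum
  have hzero := hcondensed.tendsto_atTop_zero.comp
    (tendsto_pow_atTop_atTop_of_one_lt (r := 4) (by norm_num))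
  have hone (k : ℕ) : (2 : ℝ) ^ 4 ^ k * (scaleCeil (2 ^ 4 ^ k) : ℝ)⁻¹ = 1 := by
    rw [← scale, scaleCeil_scale, scale]
    push_cast
    exact mul_inv_cancel₀ (by positivity)
  simp only [Function.comp_def, hone] at hzero
  exact one_ne_zero (tendsto_nhds_unique tendsto_const_nhds hzero)

lemma summable_indicator_inv_scaleCeil {A : Set ℕ} (hA : A ⊆ farBelowScale) :
    Summable (A.indicator fun n => (scaleCeil n : ℝ)⁻¹) := by
  refine (Real.summable_nat_pow_inv.mpr one_lt_two).of_nonneg_of_le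
    (Set.indicator_nonneg fun _ _ => by positivity) fun n => ?_
  by_cases hn : n ∈ A
  · obtain ⟨hpos, hsq⟩ := hA hn
    rw [Set.indicator_of_mem hn]
    exact inv_anti₀ (by positivity) (by exact_mod_cast hsq)
  · rw [Set.indicator_of_notMem hn]
    positivity

end InvScaleCeil

section Density

lemma limsup_Acount_inter_farBelowScale {B : Set ℕ} {d : ℝ}
    (hB : Tendsto (fun n : ℕ => Acount B n / n) atTop (𝓝 d)) :
    limsup (fun n : ℕ => Acount (B ∩ farBelowScale) n / n) atTop = d := by
  have hle (n : ℕ) : Acount (B ∩ farBelowScale) n / n ≤ Acount B n / n := by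
    gcongr
    exact Acount_mono Set.inter_subset_left n
  refine limsup_eq_of_le_of_tendsto_comp (Eventually.of_forall hle) hB tendsto_scale_sq ?_
  refine tendsto_Acount_div_of_eq_on_Ioc (m := scale) (tendsto_natCast_div_sq tendsto_scale)
    (fun k n hn => ?_) (hB.comp tendsto_scale_sq)
  exact and_iff_left (mem_farBelowScale_of_mem_Ioc hn)

lemma liminf_Acount_inter_farBelowScale (B : Set ℕ) :
    liminf (fun n : ℕ => Acount (B ∩ farBelowScale) n / n) atTop = 0 := by
  have hnonneg (n : ℕ) : 0 ≤ Acount (B ∩ farBelowScale) n / n :=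
    div_nonneg (Acount_nonneg _ n) n.cast_nonneg
  refine liminf_eq_of_le_of_tendsto_comp (Eventually.of_forall hnonneg) tendsto_const_nhds
    (tendsto_scale.comp (tendsto_add_atTop_nat 1)) ?_
  refine tendsto_Acount_div_of_eq_on_Ioc (B := ∅) (m := fun k => scale k ^ 2) ?_
    (fun k n hn => ?_) (by simp [Acount_empty])
  · simpa only [Function.comp_apply, scale_succ] using tendsto_natCast_div_sq tendsto_scale_sq
  · exact iff_of_false (fun h => notMem_farBelowScale_of_mem_Ioc hn h.2) (Set.notMem_empty n)

end Density

/-- for every δ ∈ (0,1] there are A ⊆ ℕ and a nonneg non-increasing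
sequence {c_n} with d̄(A) = δ, d̲(A) = 0, Σ c_n = ∞ and Σ χ_A(n) c_n < ∞. -/
theorem stmt2 (δ : ℝ) (hδ : δ ∈ Set.Ioc (0:ℝ) 1) :
    ∃ (A : Set ℕ) (c : ℕ → ℝ),
      (∀ n : ℕ, 1 ≤ n → 0 ≤ c n) ∧ (∀ n : ℕ, 1 ≤ n → c (n + 1) ≤ c n) ∧
      limsup (fun n : ℕ => Acount A n / n) atTop = δ ∧
      liminf (fun n : ℕ => Acount A n / n) atTop = 0 ∧
      ¬ Summable c ∧ Summable (fun n => A.indicator c n) := by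
  have hδ' : δ ∈ Set.Icc (0 : ℝ) 1 := Set.Ioc_subset_Icc_self hδ
  refine ⟨jumpSet (fun n => ⌊δ * n⌋₊) ∩ farBelowScale, fun n => (scaleCeil n : ℝ)⁻¹,
    fun n _ => by positivity, fun n _ => inv_scaleCeil_antitone n.le_succ, ?_, ?_, ?_, ?_⟩
  · exact limsup_Acount_inter_farBelowScale (tendsto_Acount_jumpSet_floor_div hδ')
  · exact liminf_Acount_inter_farBelowScale _
  · exact not_summable_inv_scaleCeil
  · exact summable_indicator_inv_scaleCeil Set.inter_subset_right
end

section
/- For every δ ∈ (0,1), there exist a function ψ ∈ 𝒟₁, a set A ⊆ ℕ and a sequence {c_n} of positive real numbers such that Σ_{n=1}^∞ ψ'(n)·c_n diverges, Σ_{n=1}^∞ χ_A(n)·c_n converges, and the upper asymptotic ψ-density of A satisfies d̄_ψ(A) ≥ δ. -/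
open Filter

/-!
The construction works for every `ψ ∈ 𝒟₁`, with density exactly `1`. Concavity bounds `ψ'(n)`,
so `ψ'(n) / ψ(n) → 0` and there is an infinite set `B` so sparse that `∑_{n ∈ B} ψ'(n) / ψ(n)`
converges; by Kronecker's lemma `B` has `ψ`-density zero, and since `∑_{k ≤ n} ψ'(k) ~ ψ(n)`
for concave `ψ`, the complement `A = Bᶜ` has `ψ`-density one.
Take `c_n = 1 / ψ'(n)` on `B`, so that infinitely many terms `ψ'(n) c_n` equal `1`, and
`c_n = 2⁻ⁿ` off `B`.
-/

lemma exists_infinite_summable_indicator {E : Type*} [NormedAddCommGroup E] [CompleteSpace E]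
    {u : ℕ → E} (hu : Tendsto u atTop (nhds 0)) :
    ∃ B : Set ℕ, B.Infinite ∧ Summable (B.indicator u) := by
  have norm_eventually_le (j : ℕ) : ∀ᶠ n in atTop, ‖u n‖ ≤ (1 / 2 : ℝ) ^ j :=
    hu.norm.eventually_le_const (by rw [norm_zero]; positivity)
  obtain ⟨φ, hφ, hle⟩ := extraction_forall_of_eventually norm_eventually_le
  have summable_comp : Summable (u ∘ φ) := summable_geometric_two.of_norm_bounded hle
  refine ⟨Set.range φ, Set.infinite_range_of_injective hφ.injective, ?_⟩
  rw [← summable_subtype_iff_indicator]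
  exact (Equiv.ofInjective φ hφ.injective).summable_iff.mp summable_comp

-- The absolutely convergent case of Kronecker's lemma, where Tannery's theorem applies.
lemma tendsto_sum_Icc_div_of_summable_div {a b : ℕ → ℝ} {m : ℕ}
    (hb_mono : MonotoneOn b (Set.Ici m)) (hb_pos : ∀ n, m ≤ n → 0 < b n)
    (hb_top : Tendsto b atTop atTop) (hab : Summable fun k => a k / b k) :
    Tendsto (fun n => (∑ k ∈ Finset.Icc m n, a k) / b n) atTop (nhds 0) := by
  let term (n k : ℕ) : ℝ := (Set.Icc m n).indicator (fun k => a k / b n) k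
  have tsum_term (n : ℕ) : ∑' k, term n k = (∑ k ∈ Finset.Icc m n, a k) / b n := by
    rw [Finset.sum_div, sum_eq_tsum_indicator, Finset.coe_Icc]
  have term_tendsto (k : ℕ) : Tendsto (term · k) atTop (nhds 0) := by
    refine squeeze_zero_norm (fun n => norm_indicator_le_norm_self _ k) ?_
    simpa only [norm_zero] using (hb_top.const_div_atTop (a k)).norm
  have norm_term_le (n k : ℕ) : ‖term n k‖ ≤ ‖a k / b k‖ := by
    by_cases hk : k ∈ Set.Icc m n
    · obtain ⟨hmk, hkn⟩ := hk
      have hbk := hb_pos k hmk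
      have hbkn : b k ≤ b n := hb_mono hmk (hmk.trans hkn) hkn
      simp only [term, Set.indicator_of_mem (Set.mem_Icc.mpr ⟨hmk, hkn⟩), norm_div,
        Real.norm_of_nonneg hbk.le, Real.norm_of_nonneg (hbk.le.trans hbkn)]
      gcongr
    · simp only [term, Set.indicator_of_notMem hk, norm_zero, norm_nonneg]
  simpa only [tsum_term, tsum_zero] using tendsto_tsum_of_dominated_convergence hab.norm
    term_tendsto (Eventually.of_forall norm_term_le)

lemma exists_pos_not_summable_mul_summable_indicator_compl {w : ℕ → ℝ} {B : Set ℕ}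
    (hB : (B ∩ Function.support w).Infinite) :
    ∃ c : ℕ → ℝ, (∀ n, 0 < c n) ∧ ¬ Summable (fun n => w n * c n) ∧
      Summable (Bᶜ.indicator c) := by
  classical
  let c (n : ℕ) : ℝ := if n ∈ B ∩ Function.support w then |w n|⁻¹ else (1 / 2) ^ n
  have c_pos (n : ℕ) : 0 < c n := by
    dsimp only [c]
    split_ifs with hn
    · exact inv_pos.mpr (abs_pos.mpr hn.2)
    · positivity
  have norm_mul_eq_one {n : ℕ} (hn : n ∈ B ∩ Function.support w) : ‖w n * c n‖ = 1 := by
    have c_eq : c n = |w n|⁻¹ := if_pos hn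
    rw [norm_mul, Real.norm_of_nonneg (c_pos n).le, Real.norm_eq_abs, c_eq,
      mul_inv_cancel₀ (abs_ne_zero.mpr hn.2)]
  refine ⟨c, c_pos, fun hsum => ?_, ?_⟩
  · have eventually_lt_one : ∀ᶠ n in cofinite, ‖w n * c n‖ < 1 :=
      hsum.tendsto_cofinite_zero.norm.eventually_lt_const (by simp)
    obtain ⟨n, hn, hlt⟩ :=
      ((frequently_cofinite_mem_iff_infinite.mpr hB).and_eventually eventually_lt_one).exists
    exact hlt.ne (norm_mul_eq_one hn)
  · refine summable_geometric_two.of_nonneg_of_le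
      (fun n => Set.indicator_nonneg (fun k _ => (c_pos k).le) n)
      (Set.indicator_le' (fun n hn => ?_) (fun n _ => by positivity))
    exact (if_neg fun h => hn h.1).le

lemma Apsi_compl_add_Apsi (ψ : ℝ → ℝ) (A : Set ℕ) (n : ℕ) :
    Apsi ψ Aᶜ n + Apsi ψ A n = Spsi ψ n := by
  rw [Apsi, Apsi, Spsi, ← Finset.sum_add_distrib]
  refine Finset.sum_congr rfl fun k _ => ?_
  rw [← mul_add, Set.indicator_compl_add_self_apply, mul_one]

lemma memD1_id : memD1 id :=
  ⟨⟨strictMono_id.strictMonoOn _, fun _ hx => hx, fun _ _ => differentiableAt_id, tendsto_id⟩,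
    concaveOn_id (convex_Ioi 0)⟩

namespace memD1

variable {ψ : ℝ → ℝ}

lemma sub_le_deriv (hψ : memD1 ψ) {x : ℝ} (hx : 0 < x) : ψ (x + 1) - ψ x ≤ deriv ψ x := by
  obtain ⟨⟨-, -, hdiff, -⟩, hconc⟩ := hψ
  simpa [slope_def_field] using
    hconc.slope_le_deriv hx (add_pos hx one_pos) (lt_add_one x) (hdiff x hx)

lemma deriv_le_sub (hψ : memD1 ψ) {x : ℝ} (hx : 0 < x) :
    deriv ψ (x + 1) ≤ ψ (x + 1) - ψ x := by
  obtain ⟨⟨-, -, hdiff, -⟩, hconc⟩ := hψ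
  have hx' : 0 < x + 1 := add_pos hx one_pos
  simpa [slope_def_field] using hconc.deriv_le_slope hx hx' (lt_add_one x) (hdiff _ hx')

lemma deriv_pos (hψ : memD1 ψ) {x : ℝ} (hx : 0 < x) : 0 < deriv ψ x :=
  (sub_pos.mpr <| hψ.1.1 hx (add_pos hx one_pos : 0 < x + 1) (lt_add_one x)).trans_le
    (hψ.sub_le_deriv hx)

lemma tendsto_natCast (hψ : memD1 ψ) : Tendsto (fun n : ℕ => ψ n) atTop atTop :=
  hψ.1.2.2.2.comp tendsto_natCast_atTop_atTop

lemma tendsto_deriv_div (hψ : memD1 ψ) :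
    Tendsto (fun n : ℕ => deriv ψ n / ψ n) atTop (nhds 0) := by
  refine squeeze_zero' ?_ ?_ (hψ.tendsto_natCast.const_div_atTop (deriv ψ 1))
  all_goals
    filter_upwards [eventually_ge_atTop 1] with n hn
    have hn' : (1 : ℝ) ≤ n := mod_cast hn
    have hn_pos : (0 : ℝ) < n := one_pos.trans_le hn'
    have hψn := hψ.1.2.1 n hn_pos
  · exact div_nonneg (hψ.deriv_pos hn_pos).le hψn.le
  · have deriv_le : deriv ψ n ≤ deriv ψ 1 :=
      hψ.2.antitoneOn_deriv hψ.1.2.2.1 (Set.mem_Ioi.mpr one_pos) hn_pos hn'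
    gcongr

lemma sub_le_Spsi (hψ : memD1 ψ) (n : ℕ) : ψ (n + 1) - ψ 1 ≤ Spsi ψ n := by
  induction n with
  | zero => simp [Spsi]
  | succ n ih =>
    rw [Spsi, Finset.sum_Icc_succ_top (by omega), ← Spsi]
    have := hψ.sub_le_deriv (x := (n + 1 : ℕ)) (by positivity)
    push_cast at this ⊢
    linarith

lemma Spsi_le (hψ : memD1 ψ) {n : ℕ} (hn : 1 ≤ n) : Spsi ψ n ≤ deriv ψ 1 + (ψ n - ψ 1) := by
  induction n, hn using Nat.le_induction with
  | base => simp [Spsi]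
  | succ n hn ih =>
    rw [Spsi, Finset.sum_Icc_succ_top (by omega), ← Spsi]
    have := hψ.deriv_le_sub (x := n) (by positivity)
    push_cast
    linarith

lemma tendsto_Spsi_div (hψ : memD1 ψ) :
    Tendsto (fun n : ℕ => Spsi ψ n / ψ n) atTop (nhds 1) := by
  have tendsto_one_add (C : ℝ) : Tendsto (fun n : ℕ => 1 + C / ψ n) atTop (nhds 1) := by
    simpa only [add_zero] using (hψ.tendsto_natCast.const_div_atTop C).const_add 1
  refine tendsto_of_tendsto_of_tendsto_of_le_of_le' (tendsto_one_add (-ψ 1))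
    (tendsto_one_add (deriv ψ 1 - ψ 1)) ?_ ?_
  all_goals
    filter_upwards [eventually_ge_atTop 1] with n hn
    have hn_pos : (0 : ℝ) < n := mod_cast hn
    have hψn := hψ.1.2.1 n hn_pos
    rw [one_add_div hψn.ne']
    gcongr
  · have := hψ.1.1 hn_pos (add_pos hn_pos one_pos : (0 : ℝ) < n + 1) (lt_add_one _)
    linarith [hψ.sub_le_Spsi n]
  · linarith [hψ.Spsi_le hn]

lemma tendsto_Apsi_div_of_summable (hψ : memD1 ψ) {B : Set ℕ}
    (hB : Summable (B.indicator fun k : ℕ => deriv ψ k / ψ k)) :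
    Tendsto (fun n : ℕ => Apsi ψ B n / ψ n) atTop (nhds 0) := by
  have natCast_pos {n : ℕ} (hn : 1 ≤ n) : (0 : ℝ) < n := mod_cast hn
  refine tendsto_sum_Icc_div_of_summable_div (b := fun n : ℕ => ψ n)
    (fun i hi j hj hij => hψ.1.1.monotoneOn (natCast_pos hi) (natCast_pos hj) (mod_cast hij))
    (fun n hn => hψ.1.2.1 n (natCast_pos hn)) hψ.tendsto_natCast (hB.congr fun k => ?_)
  by_cases hk : k ∈ B <;> simp [hk]

end memD1

theorem stmt3_general {ψ : ℝ → ℝ} (hψ : memD1 ψ) :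
    ∃ (A : Set ℕ) (c : ℕ → ℝ), (∀ n, 0 < c n) ∧
      ¬ Summable (fun n : ℕ => deriv ψ (n : ℝ) * c n) ∧ Summable (A.indicator c) ∧
      Tendsto (fun n : ℕ => Apsi ψ A n / ψ n) atTop (nhds 1) := by
  obtain ⟨B, hB_inf, hB_sum⟩ := exists_infinite_summable_indicator hψ.tendsto_deriv_div
  have inter_support_infinite : (B ∩ Function.support fun n : ℕ => deriv ψ n).Infinite :=
    (hB_inf.sdiff (Set.finite_singleton 0)).mono fun n hn =>
      ⟨hn.1, (hψ.deriv_pos (Nat.cast_pos.mpr (Nat.pos_of_ne_zero hn.2))).ne'⟩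
  obtain ⟨c, hc_pos, hc_div, hc_sum⟩ :=
    exists_pos_not_summable_mul_summable_indicator_compl inter_support_infinite
  refine ⟨Bᶜ, c, hc_pos, hc_div, hc_sum, ?_⟩
  have tendsto_sub := hψ.tendsto_Spsi_div.sub (hψ.tendsto_Apsi_div_of_summable hB_sum)
  simpa only [← Apsi_compl_add_Apsi ψ B, add_div, add_sub_cancel_right, sub_zero] using tendsto_sub

/-- for every δ ∈ (0,1) there are ψ ∈ 𝒟₁, A ⊆ ℕ and positive {c_n}
with Σ ψ'(n)c_n = ∞, Σ χ_A(n)c_n < ∞ and d̄_ψ(A) ≥ δ. -/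
theorem stmt3 (δ : ℝ) (hδ : δ ∈ Set.Ioo (0:ℝ) 1) :
    ∃ (ψ : ℝ → ℝ) (A : Set ℕ) (c : ℕ → ℝ),
      memD1 ψ ∧ (∀ n : ℕ, 1 ≤ n → 0 < c n) ∧
      ¬ Summable (fun n : ℕ => deriv ψ (n : ℝ) * c n) ∧
      Summable (fun n => A.indicator c n) ∧
      δ ≤ limsup (fun n : ℕ => Apsi ψ A n / ψ n) atTop := by
  obtain ⟨A, c, hc_pos, hc_div, hc_sum, hA⟩ := stmt3_general memD1_id
  exact ⟨id, A, c, memD1_id, fun n _ => hc_pos n, hc_div, hc_sum,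
    hδ.2.le.trans_eq hA.limsup_eq.symm⟩
end

section
/- Let ψ ∈ 𝒟, and let {c_n} be a non-negative real sequence such that the sequence {c_n/ψ'(n)} is non-increasing and tends to zero. If A ⊆ ℕ is an infinite set such that Σ_{n=1}^∞ χ_A(n)·c_n converges, then (A_ψ(n)/ψ'(n))·c_n → 0 as n → ∞. -/
open Filter

/-! Put `w k = ψ'(k)` and `g n = c n / w n`, so that the sequence in question is
`g n * ∑ k ≤ n, w k * χ_A(k)`. Each fixed summand tends to `0` because `g n` does, and since `g` is
non-increasing the summand of index `k` is at most `|g k * w k| * χ_A(k) ≤ |c k| * χ_A(k)`, which is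
summable. The claim is therefore dominated convergence for series. -/

open Topology

theorem norm_le_norm_of_antitoneOn_of_tendsto_zero {ι : Type*} [Preorder ι]
    [(atTop : Filter ι).NeBot] {g : ι → ℝ} {m k n : ι}
    (hanti : AntitoneOn g (Set.Ici m)) (hzero : Tendsto g atTop (𝓝 0))
    (hmk : m ≤ k) (hkn : k ≤ n) : ‖g n‖ ≤ ‖g k‖ := by
  have hmn : m ≤ n := hmk.trans hkn
  have hn : 0 ≤ g n := le_of_tendsto hzero <|
    (eventually_ge_atTop n).mono fun j hnj => hanti hmn (hmn.trans hnj) hnj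
  have hle : g n ≤ g k := hanti hmk hmn hkn
  rwa [Real.norm_of_nonneg hn, Real.norm_of_nonneg (hn.trans hle)]

/-- Kronecker's lemma for absolutely convergent series. -/
theorem tendsto_smul_sum_Icc_zero_of_summable_norm {E : Type*} [SeminormedAddCommGroup E]
    [NormedSpace ℝ E] {g : ℕ → ℝ} {x : ℕ → E} {m : ℕ}
    (hanti : AntitoneOn g (Set.Ici m)) (hzero : Tendsto g atTop (𝓝 0))
    (hsum : Summable fun k => ‖g k • x k‖) :
    Tendsto (fun n => g n • ∑ k ∈ Finset.Icc m n, x k) atTop (𝓝 0) := by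
  let term (n : ℕ) : ℕ → ℝ := (Finset.Icc m n : Set ℕ).indicator fun k => ‖g n • x k‖
  have norm_le_tsum_term (n : ℕ) : ‖g n • ∑ k ∈ Finset.Icc m n, x k‖ ≤ ∑' k, term n k := by
    rw [← sum_eq_tsum_indicator, Finset.smul_sum]
    exact norm_sum_le _ _
  have term_tendsto (k : ℕ) : Tendsto (term · k) atTop (𝓝 0) := by
    have smul_tendsto : Tendsto (fun n => ‖g n • x k‖) atTop (𝓝 0) := by
      simpa using (hzero.smul_const (x k)).norm
    exact squeeze_zero_norm
      (fun _ => (norm_indicator_le_norm_self _ _).trans_eq (norm_norm _)) smul_tendsto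
  have norm_term_le (n k : ℕ) : ‖term n k‖ ≤ ‖g k • x k‖ := by
    by_cases hk : k ∈ (Finset.Icc m n : Set ℕ)
    · obtain ⟨hmk, hkn⟩ := Finset.mem_Icc.mp hk
      simp only [term, Set.indicator_of_mem hk]
      rw [norm_norm, norm_smul, norm_smul]
      gcongr ?_ * _
      exact norm_le_norm_of_antitoneOn_of_tendsto_zero hanti hzero hmk hkn
    · simp only [term, Set.indicator_of_notMem hk, norm_zero, norm_nonneg]
  refine squeeze_zero_norm norm_le_tsum_term ?_
  simpa only [tsum_zero] using
    tendsto_tsum_of_dominated_convergence hsum term_tendsto (.of_forall norm_term_le)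

/-- Only an inequality because the left-hand side is `0` where `w` vanishes. -/
theorem norm_div_mul_indicator_le {ι 𝕜 : Type*} [NormedDivisionRing 𝕜] (c w : ι → 𝕜)
    (A : Set ι) (k : ι) :
    ‖c k / w k * (w k * A.indicator (fun _ => 1) k)‖ ≤ ‖A.indicator c k‖ := by
  by_cases hk : k ∈ A
  · by_cases hw : w k = 0 <;> simp [hk, hw]
  · simp [hk]

theorem stmt4_general (w c : ℕ → ℝ) (A : Set ℕ)
    (hanti : AntitoneOn (fun n => c n / w n) (Set.Ici 1))
    (hzero : Tendsto (fun n => c n / w n) atTop (𝓝 0))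
    (hconv : Summable (A.indicator c)) :
    Tendsto (fun n => (∑ k ∈ Finset.Icc 1 n, w k * A.indicator (fun _ => 1) k) / w n * c n)
      atTop (𝓝 0) := by
  have hsum : Summable fun k => ‖(c k / w k) • (w k * A.indicator (fun _ => 1) k)‖ :=
    hconv.norm.of_nonneg_of_le (fun _ => norm_nonneg _) (norm_div_mul_indicator_le c w A)
  refine (tendsto_smul_sum_Icc_zero_of_summable_norm hanti hzero hsum).congr fun n => ?_
  rw [smul_eq_mul, div_mul_comm]

/-- ψ ∈ 𝒟, c nonneg with c_n/ψ'(n) non-increasing and → 0;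
if Σ χ_A(n) c_n converges then (A_ψ(n)/ψ'(n))·c_n → 0. -/
theorem stmt4 (ψ : ℝ → ℝ) (hψ : memD ψ) (c : ℕ → ℝ)
    (hc_nonneg : ∀ n : ℕ, 1 ≤ n → 0 ≤ c n)
    (hmono : ∀ n : ℕ, 1 ≤ n →
      c (n + 1) / deriv ψ ((n + 1 : ℕ) : ℝ) ≤ c n / deriv ψ (n : ℝ))
    (hzero : Tendsto (fun n : ℕ => c n / deriv ψ (n : ℝ)) atTop (nhds 0))
    (A : Set ℕ) (hA : A.Infinite)
    (hconv : Summable (fun n => A.indicator c n)) :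
    Tendsto (fun n : ℕ => Apsi ψ A n / deriv ψ (n : ℝ) * c n) atTop (nhds 0) :=
  stmt4_general (fun n => deriv ψ n) c A (antitoneOn_nat_Ici_of_succ_le hmono) hzero hconv
end

section
/- Let ψ ∈ 𝒟 satisfy Σ_{k=1}^n ψ'(k) ~ ψ(n) as n → ∞, and let {c_n} be a non-negative real sequence such that {c_n/ψ'(n)} is non-increasing and tends to zero, and such that liminf_{n→∞} (ψ(n)/ψ'(n))·c_n > 0. If A ⊆ ℕ is an infinite set such that Σ_{n=1}^∞ χ_A(n)·c_n converges, then the asymptotic ψ-density of A is zero, i.e. lim_{n→∞} A_ψ(n)/ψ(n) = 0. -/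
open Filter

/-!
Put `r k = c k / ψ'(k)`. Since `r` is non-increasing and eventually `δ ≤ ψ(n) r n`, also
`δ ≤ ψ(n) r k` for all large `n` and all `1 ≤ k ≤ n`, that is, `ψ'(k) / ψ(n) ≤ c k / δ`. So the
terms of `A_ψ(n) / ψ(n) = ∑_{k ∈ A, k ≤ n} ψ'(k) / ψ(n)` are dominated by a summable sequence, and
each of them tends to `0` because `ψ(n) → ∞`; dominated convergence for series concludes.
-/

open scoped Topology

theorem tendsto_inv_smul_sum_of_norm_le_mul_summable {ι α E : Type*} [NormedAddCommGroup E]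
    [NormedSpace ℝ E] [CompleteSpace E] {l : Filter ι} {Ψ : ι → ℝ} {s : ι → Finset α}
    {f : α → E} {g : α → ℝ} (hΨ : Tendsto Ψ l atTop) (hg : Summable g)
    (hfg : ∀ᶠ i in l, ∀ a ∈ s i, ‖f a‖ ≤ Ψ i * g a) :
    Tendsto (fun i => (Ψ i)⁻¹ • ∑ a ∈ s i, f a) l (𝓝 0) := by
  let term (i : ι) (a : α) : E := (s i : Set α).indicator (fun b => (Ψ i)⁻¹ • f b) a
  have sum_eq_tsum_term (i : ι) : (Ψ i)⁻¹ • ∑ a ∈ s i, f a = ∑' a, term i a := by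
    rw [Finset.smul_sum, sum_eq_tsum_indicator]
  have tendsto_term (a : α) : Tendsto (term · a) l (𝓝 0) := by
    have tendsto_inv_smul : Tendsto (fun i => (Ψ i)⁻¹ • f a) l (𝓝 0) := by
      simpa using hΨ.inv_tendsto_atTop.smul_const (f a)
    exact squeeze_zero_norm (fun _ => norm_indicator_le_norm_self _ _)
      (tendsto_zero_iff_norm_tendsto_zero.1 tendsto_inv_smul)
  have norm_term_le : ∀ᶠ i in l, ∀ a, ‖term i a‖ ≤ |g a| := by
    filter_upwards [hfg, hΨ.eventually_gt_atTop 0] with i hfg_i hΨ_i a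
    by_cases ha : a ∈ s i
    · calc ‖term i a‖ = (Ψ i)⁻¹ * ‖f a‖ := by
            simp [term, ha, norm_smul, abs_of_pos hΨ_i]
        _ ≤ g a := (inv_mul_le_iff₀ hΨ_i).2 (hfg_i a ha)
        _ ≤ |g a| := le_abs_self _
    · simp [term, ha]
  simpa only [sum_eq_tsum_term, tsum_zero] using
    tendsto_tsum_of_dominated_convergence hg.abs tendsto_term norm_term_le

theorem eventually_forall_mem_Icc_le_mul_of_antitoneOn {r Ψ : ℕ → ℝ} {δ : ℝ} {m : ℕ}
    (hr : AntitoneOn r (Set.Ici m)) (hΨ : Tendsto Ψ atTop atTop)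
    (hδ : ∀ᶠ n in atTop, δ ≤ Ψ n * r n) :
    ∀ᶠ n in atTop, ∀ k ∈ Finset.Icc m n, δ ≤ Ψ n * r k := by
  filter_upwards [hδ, hΨ.eventually_ge_atTop 0] with n hδ_n hΨ_n k hk
  obtain ⟨hmk, hkn⟩ := Finset.mem_Icc.1 hk
  exact hδ_n.trans (mul_le_mul_of_nonneg_left (hr hmk (hmk.trans hkn) hkn) hΨ_n)

theorem abs_le_mul_abs_div_of_le_mul_div {x c w δ : ℝ} (hx : 0 ≤ x) (hδ : 0 < δ)
    (h : δ ≤ x * (c / w)) : |w| ≤ x * (|c| / δ) := by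
  have hw : w ≠ 0 := by
    rintro rfl
    simp only [div_zero, mul_zero] at h
    exact hδ.not_ge h
  have h_abs : δ ≤ x * |c| / |w| :=
    calc δ ≤ x * (c / w) := h
      _ ≤ x * |c / w| := by gcongr; exact le_abs_self _
      _ = x * |c| / |w| := by rw [abs_div, mul_div_assoc]
  rwa [← mul_div_assoc, le_div_iff₀ hδ, mul_comm, ← le_div_iff₀ (abs_pos.2 hw)]

theorem stmt5_general {w Ψ c : ℕ → ℝ} {A : Set ℕ} (hΨ : Tendsto Ψ atTop atTop)
    (hmono : AntitoneOn (fun n => c n / w n) (Set.Ici 1))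
    (hliminf : ∃ δ > (0 : ℝ), ∀ᶠ n in atTop, δ ≤ Ψ n / w n * c n)
    (hconv : Summable (A.indicator c)) :
    Tendsto (fun n => (∑ k ∈ Finset.Icc 1 n, w k * A.indicator (fun _ => (1 : ℝ)) k) / Ψ n)
      atTop (𝓝 0) := by
  obtain ⟨δ, hδ, hliminf⟩ := hliminf
  have le_mul_ratio : ∀ᶠ n in atTop, ∀ k ∈ Finset.Icc 1 n, δ ≤ Ψ n * (c k / w k) :=
    eventually_forall_mem_Icc_le_mul_of_antitoneOn hmono hΨ <|
      hliminf.mono fun n hn => hn.trans_eq (by ring)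
  have dominated : ∀ᶠ n in atTop, ∀ k ∈ Finset.Icc 1 n,
      ‖w k * A.indicator (fun _ => (1 : ℝ)) k‖ ≤ Ψ n * (|A.indicator c k| / δ) := by
    filter_upwards [le_mul_ratio, hΨ.eventually_ge_atTop 0] with n hn hΨ_n k hk
    by_cases hkA : k ∈ A
    · simpa [hkA] using abs_le_mul_abs_div_of_le_mul_div hΨ_n hδ (hn k hk)
    · simp [hkA]
  simpa only [smul_eq_mul, ← div_eq_inv_mul] using
    tendsto_inv_smul_sum_of_norm_le_mul_summable hΨ (hconv.abs.div_const δ) dominated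

/-- ψ ∈ 𝒟 with ∑_{k≤n} ψ'(k) ~ ψ(n), c nonneg with c_n/ψ'(n)
non-increasing → 0 and liminf (ψ(n)/ψ'(n))c_n > 0; if Σ χ_A(n) c_n converges
then the asymptotic ψ-density of A is 0. -/
theorem stmt5 (ψ : ℝ → ℝ) (hψ : memD ψ)
    (hasym : Tendsto (fun n : ℕ => Spsi ψ n / ψ n) atTop (nhds 1))
    (c : ℕ → ℝ)
    (hc_nonneg : ∀ n : ℕ, 1 ≤ n → 0 ≤ c n)
    (hmono : ∀ n : ℕ, 1 ≤ n →
      c (n + 1) / deriv ψ ((n + 1 : ℕ) : ℝ) ≤ c n / deriv ψ (n : ℝ))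
    (hzero : Tendsto (fun n : ℕ => c n / deriv ψ (n : ℝ)) atTop (nhds 0))
    (hliminf : ∃ δ > (0:ℝ), ∀ᶠ n : ℕ in atTop, δ ≤ ψ n / deriv ψ n * c n)
    (A : Set ℕ) (hA : A.Infinite)
    (hconv : Summable (fun n => A.indicator c n)) :
    Tendsto (fun n : ℕ => Apsi ψ A n / ψ n) atTop (nhds 0) := by
  exact stmt5_general (hψ.2.2.2.comp tendsto_natCast_atTop_atTop)
    (antitoneOn_nat_Ici_of_succ_le hmono) hliminf hconv
end

section
/- Suppose ψ ∈ 𝒟 satisfies Σ_{k=1}^n ψ'(k) ~ ψ(n) as n → ∞, and let {c_n} be a non-negative real sequence such that the sequence {c_n/ψ'(n)} is non-increasing. If the series Σ_{n=1}^∞ c_n converges, then lim_{n→∞} (ψ(n)/ψ'(n))·c_n = 0. -/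
open Filter

open scoped Topology Asymptotics

section WeightedOlivier

variable {a w : ℕ → ℝ}

lemma tendsto_zero_of_antitone_of_summable_mul (ha : Antitone a)
    (haw : Summable fun n => a n * w n) (hw : ¬Summable w) : Tendsto a atTop (𝓝 0) := by
  have not_one_isBigO : ¬(fun _ => (1 : ℝ)) =O[atTop] a := fun h =>
    hw <| summable_of_isBigO_nat haw <| by
      simpa only [one_mul] using h.mul (Asymptotics.isBigO_refl w atTop)
  rcases tendsto_atTop_of_antitone ha with hbot | ⟨l, hl⟩
  · exact absurd ((Asymptotics.isLittleO_one_left_iff ℝ).2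
      (tendsto_abs_atBot_atTop.comp hbot)).isBigO not_one_isBigO
  · suffices l = 0 from this ▸ hl
    by_contra hl0
    exact not_one_isBigO <| (Asymptotics.isBigO_const_const 1 hl0 atTop).trans
      ((Asymptotics.isEquivalent_const_iff_tendsto hl0).2 hl).isBigO_symm

theorem tendsto_mul_sum_range_of_antitone_of_summable_mul (ha : Antitone a)
    (haw : Summable fun n => a n * w n) (hw : ¬Summable w) :
    Tendsto (fun n => a n * ∑ k ∈ Finset.range (n + 1), w k) atTop (𝓝 0) := by
  have ha_lim : Tendsto a atTop (𝓝 0) := tendsto_zero_of_antitone_of_summable_mul ha haw hw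
  have ha_nonneg : ∀ n, 0 ≤ a n := ha.le_of_tendsto ha_lim
  -- Dominated convergence: `F n k`, which is `a n * w k` cut off to `k ≤ n`, tends to `0` for each
  -- fixed `k`, and monotonicity of `a` bounds it by `|a k * w k|`, which is summable in `k`.
  let F (n k : ℕ) : ℝ := (Finset.range (n + 1) : Set ℕ).indicator (fun k => a n * w k) k
  have F_tsum (n : ℕ) : ∑' k, F n k = a n * ∑ k ∈ Finset.range (n + 1), w k := by
    rw [Finset.mul_sum, sum_eq_tsum_indicator]
  have F_abs_le (n k : ℕ) : |F n k| ≤ |a n * w k| :=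
    norm_indicator_le_norm_self (fun k => a n * w k) k
  have F_lim (k : ℕ) : Tendsto (F · k) atTop (𝓝 0) := by
    refine squeeze_zero_norm (F_abs_le · k) ?_
    simpa only [zero_mul, abs_zero] using (ha_lim.mul_const (w k)).abs
  have F_dom (n k : ℕ) : ‖F n k‖ ≤ |a k * w k| := by
    by_cases hk : k ∈ Finset.range (n + 1)
    · refine (F_abs_le n k).trans ?_
      rw [abs_mul, abs_mul, abs_of_nonneg (ha_nonneg n), abs_of_nonneg (ha_nonneg k)]
      gcongr
      exact ha (Finset.mem_range_succ_iff.1 hk)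
    · have F_eq_zero : F n k = 0 := Set.indicator_of_notMem (Finset.mem_coe.not.2 hk) _
      rw [F_eq_zero, norm_zero]
      exact abs_nonneg _
  simpa only [F_tsum, tsum_zero] using
    tendsto_tsum_of_dominated_convergence haw.abs F_lim (.of_forall F_dom)

end WeightedOlivier

lemma summable_div_mul_self {ι : Type*} {c : ι → ℝ} (hc : Summable c) (w : ι → ℝ) :
    Summable fun i => c i / w i * w i := by
  refine hc.abs.of_norm_bounded fun i => ?_
  rcases eq_or_ne (w i) 0 with hi | hi
  · simp [hi]
  · rw [div_mul_cancel₀ _ hi, Real.norm_eq_abs]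

lemma sum_range_add_one_eq_sum_Icc {M : Type*} [AddCommMonoid M] (f : ℕ → M) (n : ℕ) :
    ∑ k ∈ Finset.range n, f (k + 1) = ∑ k ∈ Finset.Icc 1 n, f k := by
  rw [Finset.range_eq_Ico, Finset.sum_Ico_add' f 0 n 1, zero_add, Finset.Ico_add_one_right_eq_Icc]

lemma not_summable_of_tendsto_sum_Icc_atTop {w : ℕ → ℝ}
    (hw : Tendsto (fun n => ∑ k ∈ Finset.Icc 1 n, w k) atTop atTop) : ¬Summable w := by
  intro hsummable
  have hlim := ((summable_nat_add_iff 1).2 hsummable).tendsto_sum_tsum_nat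
  simp only [sum_range_add_one_eq_sum_Icc] at hlim
  exact not_tendsto_nhds_of_tendsto_atTop hw _ hlim

theorem stmt6_general {Ψ w c : ℕ → ℝ} (hw : ¬Summable w)
    (hΨ : Ψ =O[atTop] fun n => ∑ k ∈ Finset.Icc 1 n, w k)
    (hmono : ∀ n, 1 ≤ n → c (n + 1) / w (n + 1) ≤ c n / w n) (hc : Summable c) :
    Tendsto (fun n => Ψ n / w n * c n) atTop (𝓝 0) := by
  have hanti : Antitone fun n => c (n + 1) / w (n + 1) :=
    antitone_nat_of_succ_le fun n => hmono (n + 1) n.succ_pos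
  have hlim := tendsto_mul_sum_range_of_antitone_of_summable_mul hanti
    ((summable_nat_add_iff 1).2 (summable_div_mul_self hc w)) ((summable_nat_add_iff 1).not.2 hw)
  have hweighted : Tendsto (fun n => c n / w n * ∑ k ∈ Finset.Icc 1 n, w k) atTop (𝓝 0) :=
    (tendsto_add_atTop_iff_nat 1).1 <| by simpa only [sum_range_add_one_eq_sum_Icc] using hlim
  refine (((Asymptotics.isBigO_refl _ _).mul hΨ).trans_tendsto hweighted).congr fun n => ?_
  ring

/-- ψ ∈ 𝒟 with ∑_{k≤n} ψ'(k) ~ ψ(n), c nonneg with c_n/ψ'(n)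
non-increasing; if Σ c_n converges then (ψ(n)/ψ'(n))·c_n → 0. -/
theorem stmt6 (ψ : ℝ → ℝ) (hψ : memD ψ)
    (hasym : Tendsto (fun n : ℕ => Spsi ψ n / ψ n) atTop (nhds 1))
    (c : ℕ → ℝ)
    (hc_nonneg : ∀ n : ℕ, 1 ≤ n → 0 ≤ c n)
    (hmono : ∀ n : ℕ, 1 ≤ n →
      c (n + 1) / deriv ψ ((n + 1 : ℕ) : ℝ) ≤ c n / deriv ψ (n : ℝ))
    (hconv : Summable c) :
    Tendsto (fun n : ℕ => ψ n / deriv ψ (n : ℝ) * c n) atTop (nhds 0) := by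
  have hequiv : Spsi ψ ~[atTop] fun n : ℕ => ψ n := Asymptotics.isEquivalent_of_tendsto_one hasym
  have hSpsi : Tendsto (Spsi ψ) atTop atTop :=
    hequiv.symm.tendsto_atTop (hψ.2.2.2.comp tendsto_natCast_atTop_atTop)
  exact stmt6_general (not_summable_of_tendsto_sum_Icc_atTop hSpsi) hequiv.isBigO_symm hmono hconv
end

section
/- Let {c_n} be a non-negative real sequence such that Σ_{n=1}^∞ c_n diverges. Then there exists a set A ⊆ ℕ such that Σ_{n=1}^∞ χ_A(n)·c_n diverges and, for every ψ ∈ 𝒟₂, lim_{n→∞} A_ψ(n)/(n·ψ'(n)) = 0. In particular, for every ψ ∈ 𝒟₂ satisfying liminf_{n→∞} ψ(n)/(n·ψ'(n)) > 0, this same set A has asymptotic ψ-density zero, i.e. lim_{n→∞} A_ψ(n)/ψ(n) = 0. -/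
open Filter

/-!
The sets on which `c` is summable form a proper ideal, so some ultrafilter `U` contains only sets
on which `c` is not summable. For each modulus, `U` contains a residue class. Taking finite sets
`t k` with `k ≤ ∑ i ∈ t k, ‖c i‖` inside the intersection of the first `k` of these classes, the
union `A` of the `t k` still carries a non-summable part of `c`, yet it lies in a residue class of
every modulus up to finitely many elements, so it has natural density zero.

Since `ψ'` is increasing, `A_ψ(n) ≤ ψ'(n) · |A ∩ [1, n]|`, which is `o(n ψ'(n))`.
-/

section CoSummable

variable {ι E : Type*} [AddCommGroup E] [UniformSpace E] [IsUniformAddGroup E] [CompleteSpace E]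
  {f : ι → E} {s t : Set ι}

theorem summable_indicator_of_subset (ht : Summable (t.indicator f)) (hst : s ⊆ t) :
    Summable (s.indicator f) := by
  simpa only [Set.indicator_indicator, Set.inter_eq_left.2 hst] using ht.indicator s

theorem summable_indicator_union (hs : Summable (s.indicator f))
    (ht : Summable (t.indicator f)) : Summable ((s ∪ t).indicator f) := by
  rw [← Set.union_sdiff_self, Set.indicator_union_of_disjoint Set.disjoint_sdiff_right]
  exact hs.add (summable_indicator_of_subset ht Set.sdiff_subset)

/-- The filter dual to the ideal of sets on which `f` is summable: a set belongs to it when `f` is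
summable on its complement. An ultrafilter below it contains no set on which `f` is summable. -/
def coSummable (f : ι → E) : Filter ι :=
  comk (fun s => Summable (s.indicator f)) (by simp)
    (fun _ ht _ hst => summable_indicator_of_subset ht hst)
    (fun _ hs _ ht => summable_indicator_union hs ht)

theorem mem_coSummable : s ∈ coSummable f ↔ Summable (sᶜ.indicator f) :=
  mem_comk

theorem coSummable_neBot (hf : ¬ Summable f) : (coSummable f).NeBot := by
  rw [neBot_iff, Ne, ← empty_mem_iff_bot, mem_coSummable]
  simpa using hf

theorem not_summable_indicator_of_mem_ultrafilter {U : Ultrafilter ι} (hU : U ≤ coSummable f)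
    (hs : s ∈ U) : ¬ Summable (s.indicator f) := fun hsum =>
  Ultrafilter.compl_notMem_iff.2 hs (hU (mem_coSummable.2 (by rwa [compl_compl])))

end CoSummable

section PseudoIntersection

variable {ι : Type*} {f : ι → ℝ}

theorem exists_finset_subset_le_sum_of_not_summable (hf : 0 ≤ f) {s : Set ι}
    (hs : ¬ Summable (s.indicator f)) (C : ℝ) :
    ∃ t : Finset ι, (t : Set ι) ⊆ s ∧ C ≤ ∑ i ∈ t, f i := by
  classical
  by_contra! hlt
  refine hs (summable_of_sum_le (c := C) (fun i => Set.indicator_nonneg (fun i _ => hf i) i)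
    fun u => ?_)
  rw [Finset.sum_indicator_eq_sum_filter]
  exact (hlt _ fun i hi => (Finset.mem_filter.1 hi).2).le

theorem exists_not_summable_indicator_forall_finite_sdiff (hf : 0 ≤ f) {S : ℕ → Set ι}
    (hS : ∀ k, ¬ Summable ((⋂ j ≤ k, S j).indicator f)) :
    ∃ A : Set ι, ¬ Summable (A.indicator f) ∧ ∀ k, (A \ S k).Finite := by
  choose t htS htsum using fun k : ℕ =>
    exists_finset_subset_le_sum_of_not_summable hf (hS k) (k : ℝ)
  refine ⟨⋃ k, t k, fun hsum => ?_, fun k => ?_⟩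
  · obtain ⟨k, hk⟩ := exists_nat_gt (∑' i, (⋃ k, (t k : Set ι)).indicator f i)
    refine hk.not_ge ((htsum k).trans ?_)
    calc ∑ i ∈ t k, f i = ∑ i ∈ t k, (⋃ k, (t k : Set ι)).indicator f i :=
          Finset.sum_congr rfl fun i hi =>
            (Set.indicator_of_mem (Set.mem_iUnion_of_mem k hi) f).symm
      _ ≤ ∑' i, (⋃ k, (t k : Set ι)).indicator f i :=
          hsum.sum_le_tsum _ fun i _ => Set.indicator_nonneg (fun i _ => hf i) i
  · refine ((Set.finite_Iio k).biUnion fun j _ => (t j).finite_toSet).subset ?_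
    rintro i ⟨hiA, hiS⟩
    obtain ⟨j, hij⟩ := Set.mem_iUnion.1 hiA
    have hjk : j < k := by
      by_contra! hkj
      exact hiS (Set.mem_iInter₂.1 (htS j hij) k hkj)
    exact Set.mem_biUnion hjk hij

end PseudoIntersection

theorem exists_preimage_singleton_mem_ultrafilter {α κ : Type*} [Finite κ] (U : Ultrafilter α)
    (g : α → κ) : ∃ y, g ⁻¹' {y} ∈ U := by
  obtain ⟨y, hy⟩ := (U.map g).eq_pure_of_finite
  exact ⟨y, Ultrafilter.mem_map.1 (hy ▸ Set.mem_singleton y)⟩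

theorem exists_not_summable_indicator_almost_subset_residue_class {f : ℕ → ℝ} (hf : 0 ≤ f)
    (hsum : ¬ Summable f) :
    ∃ A : Set ℕ, ¬ Summable (A.indicator f) ∧
      ∀ m : ℕ, m ≠ 0 → ∃ r : ZMod m, (A \ {k : ℕ | (k : ZMod m) = r}).Finite := by
  have := coSummable_neBot hsum
  let U := Ultrafilter.of (coSummable f)
  choose r hr using fun m : ℕ =>
    exists_preimage_singleton_mem_ultrafilter U (Nat.cast : ℕ → ZMod (m + 1))
  obtain ⟨A, hA, hAr⟩ := exists_not_summable_indicator_forall_finite_sdiff hf fun k =>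
    not_summable_indicator_of_mem_ultrafilter (Ultrafilter.of_le _)
      ((biInter_mem (Set.finite_Iic k)).2 fun j _ => hr j)
  refine ⟨A, hA, fun m hm => ?_⟩
  obtain ⟨m, rfl⟩ := Nat.exists_eq_succ_of_ne_zero hm
  exact ⟨r m, hAr m⟩

section Density

/-- `A` has natural density zero, counting the elements of `A` in `[1, n]` as in `Apsi`. -/
def HasDensityZero (A : Set ℕ) : Prop :=
  Tendsto (fun n : ℕ => ((A ∩ Set.Icc 1 n).ncard : ℝ) / n) atTop (nhds 0)

theorem ncard_residue_class_inter_Icc_le (m : ℕ) (r : ZMod m) (n : ℕ) :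
    ({k : ℕ | (k : ZMod m) = r} ∩ Set.Icc 1 n).ncard ≤ n / m + 1 := by
  have hmaps : Set.MapsTo (· / m) ({k : ℕ | (k : ZMod m) = r} ∩ Set.Icc 1 n)
      (Finset.range (n / m + 1)) := fun k hk =>
    Finset.mem_coe.2 (Finset.mem_range.2 (Nat.lt_succ_of_le (Nat.div_le_div_right hk.2.2)))
  have hinj : Set.InjOn (· / m) ({k : ℕ | (k : ZMod m) = r} ∩ Set.Icc 1 n) := by
    rintro a ⟨ha, -⟩ b ⟨hb, -⟩ (hdiv : a / m = b / m)
    have hmod : a % m = b % m := (ZMod.natCast_eq_natCast_iff' a b m).1 (ha.trans hb.symm)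
    rw [← Nat.div_add_mod a m, ← Nat.div_add_mod b m, hdiv, hmod]
  simpa using Set.ncard_le_ncard_of_injOn _ hmaps hinj

theorem HasDensityZero.of_almost_subset_residue_class {A : Set ℕ}
    (hA : ∀ m : ℕ, m ≠ 0 → ∃ r : ZMod m, (A \ {k : ℕ | (k : ZMod m) = r}).Finite) :
    HasDensityZero A := by
  refine tendsto_order.2 ⟨fun ε hε => Eventually.of_forall fun n => hε.trans_le (by positivity),
    fun ε hε => ?_⟩
  obtain ⟨m, hm⟩ := exists_nat_one_div_lt hε
  obtain ⟨r, hr⟩ := hA (m + 1) m.succ_ne_zero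
  set S : Set ℕ := {k : ℕ | (k : ZMod (m + 1)) = r}
  have hlim : Tendsto (fun n : ℕ => ((A \ S).ncard + 1 : ℝ) / n + 1 / (m + 1)) atTop
      (nhds (1 / (m + 1))) := by
    simpa using (tendsto_const_div_atTop_nhds_zero_nat _).add_const (1 / ((m : ℝ) + 1))
  filter_upwards [hlim.eventually_lt_const hm, eventually_gt_atTop 0] with n hn hn0
  refine lt_of_le_of_lt ?_ hn
  have hsub : A ∩ Set.Icc 1 n ⊆ (A \ S) ∪ (S ∩ Set.Icc 1 n) := fun k ⟨hkA, hkn⟩ =>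
    (em (k ∈ S)).symm.imp (⟨hkA, ·⟩) (⟨·, hkn⟩)
  have hresidue : ((S ∩ Set.Icc 1 n).ncard : ℝ) ≤ n / (m + 1) + 1 := calc
    ((S ∩ Set.Icc 1 n).ncard : ℝ) ≤ (n / (m + 1) : ℕ) + 1 :=
      mod_cast ncard_residue_class_inter_Icc_le (m + 1) r n
    _ ≤ n / (m + 1) + 1 := by
      gcongr
      exact_mod_cast Nat.cast_div_le (α := ℝ) (m := n) (n := m + 1)
  have hcount : ((A ∩ Set.Icc 1 n).ncard : ℝ) ≤ (A \ S).ncard + (S ∩ Set.Icc 1 n).ncard :=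
    mod_cast (Set.ncard_le_ncard hsub (hr.union ((Set.finite_Icc 1 n).inter_of_right S))).trans
      (Set.ncard_union_le _ _)
  calc ((A ∩ Set.Icc 1 n).ncard : ℝ) / n
      ≤ ((A \ S).ncard + (n / (m + 1) + 1)) / n := by
        gcongr
        linarith
    _ = ((A \ S).ncard + 1) / n + 1 / (m + 1) := by
        field_simp
        ring

theorem exists_hasDensityZero_not_summable_indicator {E : Type*} [NormedAddCommGroup E]
    [NormedSpace ℝ E] [FiniteDimensional ℝ E] {c : ℕ → E} (hc : ¬ Summable c) :
    ∃ A : Set ℕ, HasDensityZero A ∧ ¬ Summable (A.indicator c) := by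
  obtain ⟨A, hA, hAr⟩ := exists_not_summable_indicator_almost_subset_residue_class
    (f := fun n => ‖c n‖) (fun n => norm_nonneg (c n)) (summable_norm_iff.not.2 hc)
  refine ⟨A, .of_almost_subset_residue_class hAr, ?_⟩
  simpa only [← summable_norm_iff (f := A.indicator c), norm_indicator_eq_indicator_norm] using hA

end Density

section Weights

variable {ψ : ℝ → ℝ} {A : Set ℕ}

theorem deriv_pos_of_convexOn_of_strictMonoOn {s : Set ℝ} (hconv : ConvexOn ℝ s ψ)
    (hmono : StrictMonoOn ψ s) {x y : ℝ} (hx : x ∈ s) (hy : y ∈ s) (hxy : x < y)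
    (hψ : DifferentiableAt ℝ ψ y) : 0 < deriv ψ y :=
  ((slope_pos_iff_of_le hxy.le).2 (hmono hx hy hxy)).trans_le (hconv.slope_le_deriv hx hy hxy hψ)

theorem Apsi_nonneg (hψ : ∀ x > 0, 0 ≤ deriv ψ x) (A : Set ℕ) (n : ℕ) : 0 ≤ Apsi ψ A n :=
  Finset.sum_nonneg fun k hk => mul_nonneg
    (hψ k (Nat.cast_pos.2 (Finset.mem_Icc.1 hk).1))
    (Set.indicator_nonneg (fun _ _ => zero_le_one) k)

theorem Apsi_le_deriv_mul_ncard (hψ : MonotoneOn (deriv ψ) (Set.Ioi 0)) (A : Set ℕ) (n : ℕ) :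
    Apsi ψ A n ≤ deriv ψ n * (A ∩ Set.Icc 1 n).ncard := by
  classical
  have hcount : ((A ∩ Set.Icc 1 n).ncard : ℝ) =
      ∑ k ∈ Finset.Icc 1 n, A.indicator (fun _ => (1 : ℝ)) k := by
    rw [Finset.sum_indicator_eq_sum_filter, Set.inter_comm]
    simp [← Set.ncard_coe_finset, Set.inter_def]
  rw [hcount, Finset.mul_sum]
  refine Finset.sum_le_sum fun k hk => ?_
  obtain ⟨hk1, hkn⟩ := Finset.mem_Icc.1 hk
  exact mul_le_mul_of_nonneg_right
    (hψ (Set.mem_Ioi.2 (Nat.cast_pos.2 hk1)) (Set.mem_Ioi.2 (Nat.cast_pos.2 (hk1.trans hkn)))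
      (Nat.cast_le.2 hkn))
    (Set.indicator_nonneg (fun _ _ => zero_le_one) k)

theorem HasDensityZero.tendsto_Apsi_div_mul_deriv (hA : HasDensityZero A)
    (hpos : ∀ x > 0, 0 < deriv ψ x) (hmono : MonotoneOn (deriv ψ) (Set.Ioi 0)) :
    Tendsto (fun n : ℕ => Apsi ψ A n / (n * deriv ψ n)) atTop (nhds 0) := by
  refine squeeze_zero' ?_ ?_ hA <;> filter_upwards [eventually_gt_atTop 0] with n hn
  · have := hpos n (Nat.cast_pos.2 hn)
    have := Apsi_nonneg (fun x hx => (hpos x hx).le) A n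
    positivity
  · have hderiv := hpos n (Nat.cast_pos.2 hn)
    calc Apsi ψ A n / (n * deriv ψ n)
        ≤ deriv ψ n * (A ∩ Set.Icc 1 n).ncard / (n * deriv ψ n) := by
          gcongr
          exact Apsi_le_deriv_mul_ncard hmono A n
      _ = (A ∩ Set.Icc 1 n).ncard / n := by field_simp

end Weights

theorem tendsto_div_zero_of_tendsto_div_of_le_div {α : Type*} {l : Filter α} {u v w : α → ℝ}
    (huv : Tendsto (fun a => u a / v a) l (nhds 0)) {δ : ℝ} (hδ : 0 < δ)
    (hwv : ∀ᶠ a in l, δ ≤ w a / v a) : Tendsto (fun a => u a / w a) l (nhds 0) := by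
  refine squeeze_zero_norm' (a := fun a => ‖u a / v a‖ / δ) ?_ (by simpa using huv.norm.div_const δ)
  filter_upwards [hwv] with a ha
  have hv : v a ≠ 0 := by
    intro h0
    rw [h0, div_zero] at ha
    exact hδ.not_ge ha
  calc ‖u a / w a‖ = ‖u a / v a‖ / ‖w a / v a‖ := by
        rw [← norm_div, div_div_div_cancel_right₀ hv]
    _ ≤ ‖u a / v a‖ / δ := by
        gcongr
        exact ha.trans (le_abs_self _)

theorem stmt12_general {E : Type*} [NormedAddCommGroup E] [NormedSpace ℝ E]
    [FiniteDimensional ℝ E] (c : ℕ → E) (hdiv : ¬ Summable c) :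
    ∃ A : Set ℕ,
      ¬ Summable (A.indicator c) ∧
      ∀ ψ : ℝ → ℝ, StrictMonoOn ψ (Set.Ioi 0) → ConvexOn ℝ (Set.Ioi 0) ψ →
        (∀ x ∈ Set.Ioi (0 : ℝ), DifferentiableAt ℝ ψ x) →
        Tendsto (fun n : ℕ => Apsi ψ A n / (n * deriv ψ n)) atTop (nhds 0) ∧
        ((∃ δ > (0 : ℝ), ∀ᶠ n : ℕ in atTop, δ ≤ ψ n / (n * deriv ψ n)) →
          Tendsto (fun n : ℕ => Apsi ψ A n / ψ n) atTop (nhds 0)) := by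
  obtain ⟨A, hA, hAc⟩ := exists_hasDensityZero_not_summable_indicator hdiv
  refine ⟨A, hAc, fun ψ hmono hconv hdiff => ?_⟩
  have hpos : ∀ x > 0, 0 < deriv ψ x := fun x hx =>
    deriv_pos_of_convexOn_of_strictMonoOn hconv hmono (half_pos hx) hx (half_lt_self hx)
      (hdiff x hx)
  have hlim := hA.tendsto_Apsi_div_mul_deriv hpos (hconv.monotoneOn_deriv hdiff)
  exact ⟨hlim, fun ⟨_, hδ, hle⟩ => tendsto_div_zero_of_tendsto_div_of_le_div hlim hδ hle⟩

/-- if Σ c_n = ∞ (c nonneg) then there is A ⊆ ℕ with Σ χ_A(n) c_n = ∞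
such that A_ψ(n)/(n ψ'(n)) → 0 for every ψ ∈ 𝒟₂; in particular, for every ψ ∈ 𝒟₂
with liminf ψ(n)/(n ψ'(n)) > 0 this same A has asymptotic ψ-density 0. -/
theorem stmt12 (c : ℕ → ℝ) (hc_nonneg : ∀ n : ℕ, 1 ≤ n → 0 ≤ c n)
    (hdiv : ¬ Summable c) :
    ∃ A : Set ℕ,
      ¬ Summable (fun n => A.indicator c n) ∧
      (∀ ψ : ℝ → ℝ, memD2 ψ →
        Tendsto (fun n : ℕ => Apsi ψ A n / (n * deriv ψ n)) atTop (nhds 0)) ∧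
      (∀ ψ : ℝ → ℝ, memD2 ψ →
        (∃ δ > (0:ℝ), ∀ᶠ n : ℕ in atTop, δ ≤ ψ n / (n * deriv ψ n)) →
        Tendsto (fun n : ℕ => Apsi ψ A n / ψ n) atTop (nhds 0)) := by
  obtain ⟨A, hA, hψ⟩ := stmt12_general c hdiv
  exact ⟨A, hA, fun ψ h => (hψ ψ h.1.1 h.2.1 h.1.2.2.1).1,
    fun ψ h => (hψ ψ h.1.1 h.2.1 h.1.2.2.1).2⟩
end

section
/- If ψ ∈ 𝒟 is log-concave (i.e., ψ'/ψ is non-increasing), then liminf_{n→∞, n∈ℕ} ψ(n)/(n·ψ'(n)) > 0 holds if and only if liminf_{x→∞, x real} ψ(x)/(x·ψ'(x)) > 0. -/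
open Filter

/-!
Write `g = ψ' / ψ`, so that `ψ x / (x * ψ' x) = (x * g x)⁻¹`, and positivity of the liminf says
that `x * g x` eventually lies in an interval `(0, C]`. For non-increasing `g`, the value at a real
`x` is squeezed by `g ⌈x⌉ ≤ g x ≤ g ⌊x⌋`: the left bound makes `x * g x` positive, and the right
bound together with `x ≤ 2 * ⌊x⌋` gives `x * g x ≤ 2 * C`.
-/

section Inv

variable {K : Type*} [Field K] [LinearOrder K] [IsStrictOrderedRing K]

theorem le_inv_iff_mem_Ioc {δ y : K} (hδ : 0 < δ) : δ ≤ y⁻¹ ↔ y ∈ Set.Ioc 0 δ⁻¹ := by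
  constructor
  · intro h
    have y_pos : 0 < y := inv_pos.mp (hδ.trans_le h)
    exact ⟨y_pos, (le_inv_comm₀ hδ y_pos).mp h⟩
  · rintro ⟨y_pos, h⟩
    exact (le_inv_comm₀ hδ y_pos).mpr h

theorem exists_pos_eventually_le_inv_iff {ι : Type*} {l : Filter ι} {u : ι → K} :
    (∃ δ > 0, ∀ᶠ i in l, δ ≤ (u i)⁻¹) ↔ ∃ C > 0, ∀ᶠ i in l, u i ∈ Set.Ioc 0 C := by
  constructor
  · rintro ⟨δ, hδ, h⟩
    exact ⟨δ⁻¹, inv_pos.mpr hδ, h.mono fun _ hi => (le_inv_iff_mem_Ioc hδ).mp hi⟩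
  · rintro ⟨C, hC, h⟩
    refine ⟨C⁻¹, inv_pos.mpr hC, h.mono fun _ hi => (le_inv_iff_mem_Ioc (inv_pos.mpr hC)).mpr ?_⟩
    rwa [inv_inv]

end Inv

section NatSampling

variable {R : Type*} [Semiring R] [LinearOrder R] [IsStrictOrderedRing R] [FloorSemiring R]

theorem le_two_mul_natFloor {x : R} (hx : 1 ≤ x) : x ≤ 2 * ⌊x⌋₊ := by
  have one_le_floor : (1 : R) ≤ ⌊x⌋₊ := by exact_mod_cast (Nat.one_le_floor_iff x).mpr hx
  calc x ≤ ⌊x⌋₊ + 1 := (Nat.lt_floor_add_one x).le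
    _ ≤ ⌊x⌋₊ + ⌊x⌋₊ := by gcongr
    _ = 2 * ⌊x⌋₊ := (two_mul _).symm

theorem tendsto_natCast_atTop_atTop_of_floorSemiring :
    Tendsto ((↑) : ℕ → R) atTop atTop :=
  Nat.mono_cast.tendsto_atTop_atTop fun x => ⟨⌈x⌉₊, Nat.le_ceil x⟩

variable {g : R → R} {a : R}

theorem mul_mem_Ioc_of_natFloor_of_natCeil {x C : R} (hg : AntitoneOn g (Set.Ioi a)) (hx : 1 ≤ x)
    (ha : a < ⌊x⌋₊) (hfloor : ⌊x⌋₊ * g ⌊x⌋₊ ≤ C) (hceil : 0 < ⌈x⌉₊ * g ⌈x⌉₊) :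
    x * g x ∈ Set.Ioc 0 (2 * C) := by
  have x_pos : 0 < x := one_pos.trans_le hx
  have floor_le : (⌊x⌋₊ : R) ≤ x := Nat.floor_le x_pos.le
  have a_lt : a < x := ha.trans_le floor_le
  have le_ceil : x ≤ ⌈x⌉₊ := Nat.le_ceil x
  have g_ceil_pos : 0 < g ⌈x⌉₊ := pos_of_mul_pos_right hceil (Nat.cast_nonneg _)
  have g_pos : 0 < g x := g_ceil_pos.trans_le (hg a_lt (a_lt.trans_le le_ceil) le_ceil)
  refine ⟨mul_pos x_pos g_pos, ?_⟩
  calc x * g x ≤ 2 * ⌊x⌋₊ * g ⌊x⌋₊ :=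
        mul_le_mul (le_two_mul_natFloor hx) (hg ha a_lt floor_le) g_pos.le (by positivity)
    _ = 2 * (⌊x⌋₊ * g ⌊x⌋₊) := mul_assoc _ _ _
    _ ≤ 2 * C := by gcongr

theorem stmt13_general (hg : AntitoneOn g (Set.Ioi a)) :
    (∃ C > 0, ∀ᶠ n : ℕ in atTop, n * g n ∈ Set.Ioc 0 C) ↔
      ∃ C > 0, ∀ᶠ x : R in atTop, x * g x ∈ Set.Ioc 0 C := by
  constructor
  · rintro ⟨C, hC, bound_nat⟩
    have a_lt_floor : ∀ᶠ x : R in atTop, a < ⌊x⌋₊ :=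
      tendsto_nat_floor_atTop.eventually
        (tendsto_natCast_atTop_atTop_of_floorSemiring.eventually_gt_atTop a)
    refine ⟨2 * C, by positivity, ?_⟩
    filter_upwards [eventually_ge_atTop 1, a_lt_floor, tendsto_nat_floor_atTop.eventually bound_nat,
      tendsto_nat_ceil_atTop.eventually bound_nat] with x hx ha hfloor hceil
    exact mul_mem_Ioc_of_natFloor_of_natCeil hg hx ha hfloor.2 hceil.1
  · rintro ⟨C, hC, bound⟩
    exact ⟨C, hC, tendsto_natCast_atTop_atTop_of_floorSemiring.eventually bound⟩

end NatSampling

/-- for log-concave ψ ∈ 𝒟, liminf over ℕ of ψ(n)/(n ψ'(n)) is positive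
iff liminf over ℝ of ψ(x)/(x ψ'(x)) is positive. -/
theorem stmt13 (ψ : ℝ → ℝ) (hψ : memD ψ)
    (hlc : AntitoneOn (fun x => deriv ψ x / ψ x) (Set.Ioi 0)) :
    (∃ δ > (0:ℝ), ∀ᶠ n : ℕ in atTop, δ ≤ ψ n / (n * deriv ψ n)) ↔
      (∃ δ > (0:ℝ), ∀ᶠ x : ℝ in atTop, δ ≤ ψ x / (x * deriv ψ x)) := by
  have div_eq_inv (x : ℝ) : ψ x / (x * deriv ψ x) = (x * (deriv ψ x / ψ x))⁻¹ := by
    rw [← mul_div_assoc, inv_div]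
  simpa only [div_eq_inv, exists_pos_eventually_le_inv_iff] using stmt13_general hlc
end

section
/- Let ψ ∈ 𝒟 satisfy liminf_{x→∞} ψ(x)/(x·ψ'(x)) > 0. Then ψ has finite order of growth, i.e. limsup_{x→∞} (log ψ(x))/(log x) < ∞. If in addition ψ is log-concave (i.e., ψ'/ψ is non-increasing), then there exist constants C ≥ 2 and R > 0 with ψ(2x) ≤ C·ψ(x) for all x ≥ R, and moreover limsup_{x→∞} x·log(ψ(x+1)/ψ(x)) < ∞. -/
open Filter

/-!
The hypothesis says that `x ψ'(x) ≤ K ψ(x)` for large `x`, where `K = δ⁻¹`, and this is exactly the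
statement that `ψ(x) / x ^ K` is eventually non-increasing. Hence `ψ(y) ≤ (y / x) ^ K ψ(x)` for
large `x ≤ y`. Fixing `x` bounds the order of growth, `y = 2x` is the doubling condition, and
`y = x + 1` gives `x log (ψ(x + 1) / ψ(x)) ≤ K x log (1 + 1 / x) ≤ K`.
-/

section PowerGrowth

variable {ψ : ℝ → ℝ} {K : ℝ}

theorem antitoneOn_div_rpow_of_mul_deriv_le {D : Set ℝ} (hD : Convex ℝ D) (hD_pos : D ⊆ Set.Ioi 0)
    (hcont : ContinuousOn ψ D) (hdiff : DifferentiableOn ℝ ψ (interior D))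
    (hderiv : ∀ x ∈ interior D, x * deriv ψ x ≤ K * ψ x) :
    AntitoneOn (fun x => ψ x / x ^ K) D := by
  have hasDerivAt_quotient : ∀ x ∈ interior D, HasDerivAt (fun x => ψ x / x ^ K)
      ((deriv ψ x * x ^ K - ψ x * (K * x ^ (K - 1))) / (x ^ K) ^ 2) x := fun x hx => by
    have hx_pos : 0 < x := hD_pos (interior_subset hx)
    exact (hdiff.differentiableAt (isOpen_interior.mem_nhds hx)).hasDerivAt.div
      (Real.hasDerivAt_rpow_const (.inl hx_pos.ne')) (Real.rpow_pos_of_pos hx_pos K).ne'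
  refine antitoneOn_of_deriv_nonpos hD ?_
    (fun x hx => (hasDerivAt_quotient x hx).differentiableAt.differentiableWithinAt) ?_
  · exact hcont.div (continuousOn_id.rpow_const fun x hx => .inl (hD_pos hx).ne')
      fun x hx => (Real.rpow_pos_of_pos (hD_pos hx) K).ne'
  · intro x hx
    have hx_pos : 0 < x := hD_pos (interior_subset hx)
    have hnumerator : deriv ψ x * x ^ K - ψ x * (K * x ^ (K - 1)) =
        x ^ (K - 1) * (x * deriv ψ x - K * ψ x) := by
      rw [Real.rpow_sub_one hx_pos.ne']
      field_simp
    rw [(hasDerivAt_quotient x hx).deriv, hnumerator]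
    exact div_nonpos_of_nonpos_of_nonneg
      (mul_nonpos_of_nonneg_of_nonpos (by positivity) (sub_nonpos.2 (hderiv x hx))) (sq_nonneg _)

theorem exists_antitoneOn_div_rpow {δ : ℝ} (hδ : 0 < δ) (hpos : ∀ᶠ x in atTop, 0 < ψ x)
    (hdiff : ∀ᶠ x in atTop, DifferentiableAt ℝ ψ x)
    (hle : ∀ᶠ x in atTop, δ ≤ ψ x / (x * deriv ψ x)) :
    ∃ R > 0, AntitoneOn (fun x => ψ x / x ^ δ⁻¹) (Set.Ici R) := by
  have hderiv : ∀ᶠ x in atTop, x * deriv ψ x ≤ δ⁻¹ * ψ x := by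
    filter_upwards [hpos, hle] with x hψx hx
    have hden_pos : 0 < x * deriv ψ x := (div_pos_iff_of_pos_left hψx).1 (hδ.trans_le hx)
    rwa [inv_mul_eq_div, le_div_comm₀ hden_pos hδ]
  obtain ⟨R₀, hR₀⟩ := (hdiff.and hderiv).exists_forall_of_atTop
  refine ⟨max R₀ 1, by positivity, antitoneOn_div_rpow_of_mul_deriv_le (convex_Ici _) ?_ ?_ ?_ ?_⟩
  · exact Set.Ici_subset_Ioi.2 (by positivity)
  · exact fun x hx => (hR₀ x (le_of_max_le_left hx)).1.continuousAt.continuousWithinAt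
  · exact fun x hx =>
      (hR₀ x (le_of_max_le_left (interior_subset hx))).1.differentiableWithinAt
  · exact fun x hx => (hR₀ x (le_of_max_le_left (interior_subset hx))).2

theorem le_div_rpow_mul_of_antitoneOn {s : Set ℝ} (h : AntitoneOn (fun x => ψ x / x ^ K) s)
    {x y : ℝ} (hx : x ∈ s) (hy : y ∈ s) (hx_pos : 0 < x) (hxy : x ≤ y) :
    ψ y ≤ (y / x) ^ K * ψ x := by
  have hy_pos : 0 < y := hx_pos.trans_le hxy
  calc ψ y ≤ ψ x / x ^ K * y ^ K := (div_le_iff₀ (by positivity)).1 (h hx hy hxy)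
    _ = (y / x) ^ K * ψ x := by rw [Real.div_rpow hy_pos.le hx_pos.le]; ring

theorem eventually_log_div_log_le_of_le_mul_rpow {C M : ℝ} (hpos : ∀ᶠ x in atTop, 0 < ψ x)
    (hle : ∀ᶠ x in atTop, ψ x ≤ C * x ^ K) (hKM : K < M) :
    ∀ᶠ x in atTop, Real.log (ψ x) / Real.log x ≤ M := by
  have hconst : ∀ᶠ x in atTop, Real.log C ≤ (M - K) * Real.log x :=
    (Real.tendsto_log_atTop.const_mul_atTop (sub_pos.2 hKM)).eventually_ge_atTop _
  filter_upwards [hpos, hle, hconst, eventually_gt_atTop 1] with x hψx hx hCx hx_one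
  have hrpow_pos : 0 < x ^ K := by positivity
  have hC : 0 < C := pos_of_mul_pos_left (hψx.trans_le hx) hrpow_pos.le
  rw [div_le_iff₀ (Real.log_pos hx_one)]
  calc Real.log (ψ x) ≤ Real.log (C * x ^ K) := Real.log_le_log hψx hx
    _ = Real.log C + K * Real.log x := by
      rw [Real.log_mul hC.ne' hrpow_pos.ne', Real.log_rpow (one_pos.trans hx_one)]
    _ ≤ M * Real.log x := by linarith

theorem mul_log_div_le_of_le_rpow_mul {a b x : ℝ} (ha : 0 < a) (hb : 0 < b) (hx : 0 < x)
    (hK : 0 ≤ K) (h : b ≤ ((x + 1) / x) ^ K * a) : x * Real.log (b / a) ≤ K := by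
  calc x * Real.log (b / a) ≤ x * Real.log (((x + 1) / x) ^ K) := by
        gcongr
        exact (div_le_iff₀ ha).2 h
    _ = x * (K * Real.log ((x + 1) / x)) := by rw [Real.log_rpow (by positivity)]
    _ ≤ x * (K * ((x + 1) / x - 1)) := by
        gcongr
        exact Real.log_le_sub_one_of_pos (by positivity)
    _ = K := by field_simp; ring

end PowerGrowth

theorem stmt15_general (ψ : ℝ → ℝ) (hpos : ∀ᶠ x in atTop, 0 < ψ x)
    (hdiff : ∀ᶠ x in atTop, DifferentiableAt ℝ ψ x)
    (hliminf : ∃ δ > (0 : ℝ), ∀ᶠ x : ℝ in atTop, δ ≤ ψ x / (x * deriv ψ x)) :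
    (∃ M : ℝ, ∀ᶠ x : ℝ in atTop, Real.log (ψ x) / Real.log x ≤ M) ∧
    (∃ C : ℝ, 2 ≤ C ∧ ∃ R : ℝ, 0 < R ∧ ∀ x : ℝ, R ≤ x → ψ (2 * x) ≤ C * ψ x) ∧
    (∃ M : ℝ, ∀ᶠ x : ℝ in atTop, x * Real.log (ψ (x + 1) / ψ x) ≤ M) := by
  obtain ⟨δ, hδ, hle⟩ := hliminf
  obtain ⟨R₀, hR₀, hanti⟩ := exists_antitoneOn_div_rpow hδ hpos hdiff hle
  obtain ⟨R₁, hR₁⟩ := hpos.exists_forall_of_atTop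
  have hgrowth {x y : ℝ} (hx : R₀ ≤ x) (hxy : x ≤ y) : ψ y ≤ (y / x) ^ δ⁻¹ * ψ x :=
    le_div_rpow_mul_of_antitoneOn hanti hx (hx.trans hxy) (hR₀.trans_le hx) hxy
  refine ⟨⟨δ⁻¹ + 1, ?_⟩, ⟨max 2 (2 ^ δ⁻¹), le_max_left _ _, max R₀ R₁, lt_max_of_lt_left hR₀, ?_⟩,
    ⟨δ⁻¹, ?_⟩⟩
  · refine eventually_log_div_log_le_of_le_mul_rpow (C := ψ R₀ / R₀ ^ δ⁻¹) hpos ?_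
      (lt_add_one _)
    filter_upwards [eventually_ge_atTop R₀] with x hx
    exact (div_le_iff₀ (Real.rpow_pos_of_pos (hR₀.trans_le hx) _)).1 (hanti Set.self_mem_Ici hx hx)
  · intro x hx
    have hx_pos : 0 < x := hR₀.trans_le (le_of_max_le_left hx)
    have hψx : 0 < ψ x := hR₁ x (le_of_max_le_right hx)
    calc ψ (2 * x) ≤ (2 * x / x) ^ δ⁻¹ * ψ x := hgrowth (le_of_max_le_left hx) (by linarith)
      _ = 2 ^ δ⁻¹ * ψ x := by rw [mul_div_cancel_right₀ _ hx_pos.ne']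
      _ ≤ max 2 (2 ^ δ⁻¹) * ψ x := by gcongr; exact le_max_right _ _
  · filter_upwards [eventually_ge_atTop R₀, eventually_ge_atTop R₁] with x hx hx'
    exact mul_log_div_le_of_le_rpow_mul (hR₁ x hx') (hR₁ (x + 1) (by linarith))
      (hR₀.trans_le hx) (by positivity) (hgrowth hx (by linarith))

/-- if ψ ∈ 𝒟 satisfies liminf_{x→∞} ψ(x)/(x ψ'(x)) > 0 then ψ has
finite order of growth; if in addition ψ is log-concave then ψ satisfies a doubling
condition ψ(2x) ≤ C ψ(x) and limsup_{x→∞} x log(ψ(x+1)/ψ(x)) < ∞. -/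
theorem stmt15 (ψ : ℝ → ℝ) (hψ : memD ψ)
    (hliminf : ∃ δ > (0:ℝ), ∀ᶠ x : ℝ in atTop, δ ≤ ψ x / (x * deriv ψ x)) :
    (∃ M : ℝ, ∀ᶠ x : ℝ in atTop, Real.log (ψ x) / Real.log x ≤ M) ∧
    (AntitoneOn (fun x => deriv ψ x / ψ x) (Set.Ioi 0) →
      (∃ C : ℝ, 2 ≤ C ∧ ∃ R : ℝ, 0 < R ∧ ∀ x : ℝ, R ≤ x → ψ (2 * x) ≤ C * ψ x) ∧
      (∃ M : ℝ, ∀ᶠ x : ℝ in atTop, x * Real.log (ψ (x + 1) / ψ x) ≤ M)) := by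
  obtain ⟨horder, hrest⟩ := stmt15_general ψ ((eventually_gt_atTop 0).mono hψ.2.1)
    ((eventually_gt_atTop 0).mono hψ.2.2.1) hliminf
  exact ⟨horder, fun _ => hrest⟩
end

section
/- Let ψ ∈ 𝒟, and let {c_n} be a positive real sequence such that {c_n/ψ'(n)} is non-increasing and tends to zero. Let {m_n} be a real sequence with m_n ∈ {−1, 0, 1}, and set A = {n ∈ ℕ : m_n = 1} and B = {n ∈ ℕ : m_n = −1}. If the sub-signed series Σ_{n=1}^∞ m_n·c_n converges, then ((A_ψ(n) − B_ψ(n))/ψ'(n))·c_n → 0 as n → ∞. -/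
open Filter

/-!
Put `r n = c n / ψ' n`. Then `∑ m n * c n` is `∑ r n * (ψ' n * m n)`, and the claim is that `r n`
times the `n`-th partial sum of `∑ ψ' n * m n` tends to zero. Unless `r` is eventually zero, this is
Kronecker's lemma for the sequence `1 / r n`, which increases to infinity. Kronecker's lemma itself
follows by summation by parts, since a weighted mean of a convergent sequence with weights of
infinite sum has the same limit as the sequence.
-/

open Topology

section NormedSpace

variable {E : Type*} [NormedAddCommGroup E] [NormedSpace ℝ E]

theorem tendsto_inv_sum_smul_sum_smul {v : ℕ → ℝ} {u : ℕ → E} {L : E} (hv : 0 ≤ v)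
    (hv_sum : Tendsto (fun n ↦ ∑ k ∈ Finset.range n, v k) atTop atTop)
    (hu : Tendsto u atTop (𝓝 L)) :
    Tendsto (fun n ↦ (∑ k ∈ Finset.range n, v k)⁻¹ • ∑ k ∈ Finset.range n, v k • u k)
      atTop (𝓝 L) := by
  have h_error : (fun n ↦ ∑ k ∈ Finset.range n, v k • (u k - L)) =o[atTop]
      fun n ↦ ∑ k ∈ Finset.range n, v k := by
    refine Asymptotics.IsLittleO.sum_range ?_ hv hv_sum
    simpa only [smul_eq_mul, mul_one] using (Asymptotics.isBigO_refl v atTop).smul_isLittleO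
      ((Asymptotics.isLittleO_one_iff ℝ).2 (tendsto_sub_nhds_zero_iff.2 hu))
  rw [← tendsto_sub_nhds_zero_iff]
  refine h_error.tendsto_inv_smul_nhds_zero.congr' ?_
  filter_upwards [hv_sum.eventually_ne_atTop 0] with n hn
  simp only [smul_sub, Finset.sum_sub_distrib, ← Finset.sum_smul, inv_smul_smul₀ hn]

/-- **Kronecker's lemma**. -/
theorem tendsto_inv_smul_sum_smul_of_monotone {b : ℕ → ℝ} {x : ℕ → E} {L : E} (hb : Monotone b)
    (hb_top : Tendsto b atTop atTop)
    (hx : Tendsto (fun n ↦ ∑ k ∈ Finset.range n, x k) atTop (𝓝 L)) :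
    Tendsto (fun n ↦ (b n)⁻¹ • ∑ k ∈ Finset.range (n + 1), b k • x k) atTop (𝓝 0) := by
  set S : ℕ → E := fun n ↦ ∑ k ∈ Finset.range (n + 1), x k
  have hS : Tendsto S atTop (𝓝 L) := hx.comp (tendsto_add_atTop_nat 1)
  have h_increments_top : Tendsto (fun n ↦ b n - b 0) atTop atTop :=
    tendsto_atTop_add_const_right _ _ hb_top
  have h_mean : Tendsto
      (fun n ↦ (b n - b 0)⁻¹ • ∑ k ∈ Finset.range n, (b (k + 1) - b k) • S k) atTop (𝓝 L) := by
    simpa only [Finset.sum_range_sub] using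
      tendsto_inv_sum_smul_sum_smul (fun k ↦ sub_nonneg.2 (hb k.le_succ))
        (by simpa only [Finset.sum_range_sub] using h_increments_top) hS
  have h_ratio : Tendsto (fun n ↦ 1 - b 0 / b n) atTop (𝓝 1) := by
    simpa only [sub_zero] using (hb_top.const_div_atTop (b 0)).const_sub 1
  have h_limit := hS.sub (h_ratio.smul h_mean)
  rw [one_smul, sub_self] at h_limit
  refine h_limit.congr' ?_
  filter_upwards [hb_top.eventually_ne_atTop 0, h_increments_top.eventually_ne_atTop 0]
    with n hbn h_increment
  have h_coeff : (1 - b 0 / b n) * (b n - b 0)⁻¹ = (b n)⁻¹ := by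
    field_simp
  rw [Finset.sum_range_by_parts b x, Nat.add_sub_cancel, smul_sub, inv_smul_smul₀ hbn, smul_smul,
    h_coeff]

theorem tendsto_smul_zero_of_antitone_of_eq_zero {r : ℕ → ℝ} (hr : Antitone r)
    (hr_zero : Tendsto r atTop (𝓝 0)) {N : ℕ} (hN : r N = 0) (s : ℕ → E) :
    Tendsto (fun n ↦ r n • s n) atTop (𝓝 0) := by
  refine tendsto_const_nhds.congr' ?_
  filter_upwards [eventually_ge_atTop N] with n hn
  have hrn : r n = 0 := le_antisymm (hN ▸ hr hn) (hr.le_of_tendsto hr_zero n)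
  rw [hrn, zero_smul]

theorem tendsto_smul_sum_of_antitone {r : ℕ → ℝ} {a : ℕ → E} {L : E} (hr : Antitone r)
    (hr_zero : Tendsto r atTop (𝓝 0))
    (ha : Tendsto (fun n ↦ ∑ k ∈ Finset.range n, r k • a k) atTop (𝓝 L)) :
    Tendsto (fun n ↦ r n • ∑ k ∈ Finset.range (n + 1), a k) atTop (𝓝 0) := by
  by_cases h_vanish : ∃ N, r N = 0
  · obtain ⟨N, hN⟩ := h_vanish
    exact tendsto_smul_zero_of_antitone_of_eq_zero hr hr_zero hN _
  push Not at h_vanish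
  have hr_pos (n : ℕ) : 0 < r n := (hr.le_of_tendsto hr_zero n).lt_of_ne' (h_vanish n)
  have h_inv_mono : Monotone fun n ↦ (r n)⁻¹ := fun _ j hij ↦ inv_anti₀ (hr_pos j) (hr hij)
  have h_inv_top : Tendsto (fun n ↦ (r n)⁻¹) atTop atTop :=
    (tendsto_nhdsWithin_iff.2 ⟨hr_zero, .of_forall hr_pos⟩).inv_tendsto_nhdsGT_zero
  simpa only [inv_inv, inv_smul_smul₀ (h_vanish _)] using
    tendsto_inv_smul_sum_smul_of_monotone h_inv_mono h_inv_top ha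

end NormedSpace

theorem sum_Icc_one_eq_sum_range {M : Type*} [AddCommMonoid M] (f : ℕ → M) (n : ℕ) :
    ∑ k ∈ Finset.Icc 1 n, f k = ∑ k ∈ Finset.range n, f (k + 1) := by
  rw [Finset.range_eq_Ico, Finset.sum_Ico_add', zero_add, Finset.Ico_add_one_right_eq_Icc]

theorem Apsi_sub_Apsi_eq_sum (ψ : ℝ → ℝ) {m : ℕ → ℝ} (hm : ∀ n, m n = -1 ∨ m n = 0 ∨ m n = 1)
    (n : ℕ) :
    Apsi ψ {k | m k = 1} n - Apsi ψ {k | m k = -1} n =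
      ∑ k ∈ Finset.Icc 1 n, deriv ψ k * m k := by
  simp only [Apsi, ← Finset.sum_sub_distrib, ← mul_sub]
  refine Finset.sum_congr rfl fun k _ ↦ congrArg _ ?_
  rcases hm k with h | h | h <;> norm_num [Set.indicator, h]

theorem stmt16_general {w c m : ℕ → ℝ} {L : ℝ}
    (hmono : ∀ n, 1 ≤ n → c (n + 1) / w (n + 1) ≤ c n / w n)
    (hzero : Tendsto (fun n ↦ c n / w n) atTop (𝓝 0))
    (hconv : Tendsto (fun N ↦ ∑ n ∈ Finset.Icc 1 N, m n * c n) atTop (𝓝 L)) :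
    Tendsto (fun n ↦ (∑ k ∈ Finset.Icc 1 n, w k * m k) / w n * c n) atTop (𝓝 0) := by
  set r : ℕ → ℝ := fun n ↦ c (n + 1) / w (n + 1)
  have hr : Antitone r := antitone_nat_of_succ_le fun n ↦ hmono (n + 1) n.succ_pos
  have hr_zero : Tendsto r atTop (𝓝 0) := hzero.comp (tendsto_add_atTop_nat 1)
  suffices h : Tendsto (fun n ↦ r n • ∑ k ∈ Finset.range (n + 1), w (k + 1) * m (k + 1))
      atTop (𝓝 0) by
    rw [← tendsto_add_atTop_iff_nat 1]
    refine h.congr fun n ↦ ?_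
    rw [sum_Icc_one_eq_sum_range, smul_eq_mul, div_mul_comm]
  by_cases h_vanish : ∃ N, w (N + 1) = 0
  · -- Here `r N = 0` by the convention `x / 0 = 0`, so `r` vanishes from `N` on.
    obtain ⟨N, hN⟩ := h_vanish
    have hrN : r N = 0 := by simp only [r, hN, div_zero]
    exact tendsto_smul_zero_of_antitone_of_eq_zero hr hr_zero hrN _
  push Not at h_vanish
  refine tendsto_smul_sum_of_antitone hr hr_zero (hconv.congr fun n ↦ ?_)
  rw [sum_Icc_one_eq_sum_range]
  refine Finset.sum_congr rfl fun k _ ↦ ?_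
  rw [smul_eq_mul, ← mul_assoc, div_mul_cancel₀ _ (h_vanish k), mul_comm]

/-- ψ ∈ 𝒟, c positive with c_n/ψ'(n) non-increasing → 0, m_n ∈ {−1,0,1},
A = {n : m_n = 1}, B = {n : m_n = −1}; if Σ m_n c_n converges then
((A_ψ(n) − B_ψ(n))/ψ'(n))·c_n → 0. -/
theorem stmt16 (ψ : ℝ → ℝ) (hψ : memD ψ) (c : ℕ → ℝ)
    (hc_pos : ∀ n : ℕ, 1 ≤ n → 0 < c n)
    (hmono : ∀ n : ℕ, 1 ≤ n →
      c (n + 1) / deriv ψ ((n + 1 : ℕ) : ℝ) ≤ c n / deriv ψ (n : ℝ))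
    (hzero : Tendsto (fun n : ℕ => c n / deriv ψ (n : ℝ)) atTop (nhds 0))
    (m : ℕ → ℝ) (hm : ∀ n : ℕ, m n = -1 ∨ m n = 0 ∨ m n = 1)
    (hconv : ∃ L : ℝ,
      Tendsto (fun N : ℕ => ∑ n ∈ Finset.Icc 1 N, m n * c n) atTop (nhds L)) :
    Tendsto (fun n : ℕ =>
        (Apsi ψ {k | m k = 1} n - Apsi ψ {k | m k = -1} n) / deriv ψ (n : ℝ) * c n)
      atTop (nhds 0) := by
  obtain ⟨L, hL⟩ := hconv
  simpa only [Apsi_sub_Apsi_eq_sum ψ hm] using stmt16_general hmono hzero hL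
end

section
/- If ψ ∈ 𝒟 is log-concave (i.e., ψ'/ψ is non-increasing), then inf_{x>1} (ψ(x) − ψ(x−1))/ψ'(x) > 0. -/
open Filter

/-!
Write `L = ψ'/ψ`, which is the derivative of `log ψ`. Log-concavity says that `log ψ` is concave, so
its slope on `[x - h, x]` is at least `L x`. Hence
`ψ x ≥ exp (h * L x) * ψ (x - h) ≥ (1 + h * L x) * ψ (x - h)`, which rearranges to
`(ψ x - ψ (x - h)) / ψ' x ≥ h / (1 + h * L x)`. The right-hand side is bounded below away from zero
because `L` is non-increasing.
-/

section LogConcave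

variable {ψ : ℝ → ℝ} {s : Set ℝ} {x y : ℝ}

theorem concaveOn_log_of_antitoneOn_logDeriv (hs : Convex ℝ s) (hpos : ∀ z ∈ s, 0 < ψ z)
    (hdiff : ∀ z ∈ s, DifferentiableAt ℝ ψ z) (hanti : AntitoneOn (logDeriv ψ) s) :
    ConcaveOn ℝ s (fun z => Real.log (ψ z)) := by
  have hdiff_log : ∀ z ∈ s, DifferentiableAt ℝ (fun z => Real.log (ψ z)) z :=
    fun z hz => (hdiff z hz).log (hpos z hz).ne'
  refine AntitoneOn.concaveOn_of_deriv hs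
    (fun z hz => (hdiff_log z hz).continuousAt.continuousWithinAt)
    (fun z hz => (hdiff_log z (interior_subset hz)).differentiableWithinAt)
    ((hanti.mono interior_subset).congr fun z hz => ?_)
  have hz : z ∈ s := interior_subset hz
  exact (Real.deriv_log_comp_eq_logDeriv (hdiff z hz) (hpos z hz).ne').symm

theorem logDeriv_pos_of_concaveOn_log (hconc : ConcaveOn ℝ s (fun z => Real.log (ψ z)))
    (hx : x ∈ s) (hy : y ∈ s) (hxy : x < y) (hpos : 0 < ψ x) (hlt : ψ x < ψ y)
    (hdiff : DifferentiableAt ℝ ψ x) : 0 < logDeriv ψ x := by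
  have hslope : slope (fun z => Real.log (ψ z)) x y ≤ logDeriv ψ x :=
    hconc.slope_le_of_hasDerivAt hx hy hxy (hdiff.hasDerivAt.log hpos.ne')
  have hlog : Real.log (ψ x) < Real.log (ψ y) := Real.log_lt_log hpos hlt
  refine lt_of_lt_of_le ?_ hslope
  rw [slope_def_field]
  exact div_pos (sub_pos.2 hlog) (sub_pos.2 hxy)

theorem one_add_sub_mul_logDeriv_mul_le (hconc : ConcaveOn ℝ s (fun z => Real.log (ψ z)))
    (hx : x ∈ s) (hy : y ∈ s) (hxy : x < y) (hposx : 0 < ψ x) (hposy : 0 < ψ y)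
    (hdiff : DifferentiableAt ℝ ψ y) : (1 + (y - x) * logDeriv ψ y) * ψ x ≤ ψ y := by
  have hslope : logDeriv ψ y ≤ slope (fun z => Real.log (ψ z)) x y :=
    hconc.le_slope_of_hasDerivAt hx hy hxy (hdiff.hasDerivAt.log hposy.ne')
  rw [slope_def_field, le_div_iff₀ (sub_pos.2 hxy), ← Real.log_div hposy.ne' hposx.ne'] at hslope
  rw [← le_div_iff₀ hposx]
  calc
    1 + (y - x) * logDeriv ψ y ≤ 1 + Real.log (ψ y / ψ x) := by linarith
    _ ≤ ψ y / ψ x := by linarith [Real.log_le_sub_one_of_pos (div_pos hposy hposx)]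

theorem div_one_add_mul_logDeriv_le_sub_div_deriv
    (hconc : ConcaveOn ℝ s (fun z => Real.log (ψ z)))
    (hx : x ∈ s) (hy : y ∈ s) (hxy : x < y) (hposx : 0 < ψ x) (hposy : 0 < ψ y)
    (hdiff : DifferentiableAt ℝ ψ y) (hlogDeriv : 0 < logDeriv ψ y) :
    (y - x) / (1 + (y - x) * logDeriv ψ y) ≤ (ψ y - ψ x) / deriv ψ y := by
  have hgrowth := one_add_sub_mul_logDeriv_mul_le hconc hx hy hxy hposx hposy hdiff
  have hderiv_eq : deriv ψ y = logDeriv ψ y * ψ y := by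
    rw [logDeriv_apply, div_mul_cancel₀ _ hposy.ne']
  have : 0 < y - x := sub_pos.2 hxy
  rw [hderiv_eq, div_le_div_iff₀ (by positivity) (by positivity)]
  linarith

end LogConcave

theorem stmt19_general {ψ : ℝ → ℝ} {a h : ℝ} (hh : 0 < h)
    (hmono : StrictMonoOn ψ (Set.Ioi a)) (hpos : ∀ x ∈ Set.Ioi a, 0 < ψ x)
    (hdiff : ∀ x ∈ Set.Ioi a, DifferentiableAt ℝ ψ x)
    (hanti : AntitoneOn (logDeriv ψ) (Set.Ioi a)) :
    ∃ δ > 0, ∀ x, a + h < x → δ ≤ (ψ x - ψ (x - h)) / deriv ψ x := by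
  have hconc := concaveOn_log_of_antitoneOn_logDeriv (convex_Ioi a) hpos hdiff hanti
  have hlogDeriv : ∀ x ∈ Set.Ioi a, 0 < logDeriv ψ x := fun x hx =>
    have hx' : x + 1 ∈ Set.Ioi a := hx.trans (lt_add_one x)
    logDeriv_pos_of_concaveOn_log hconc hx hx' (lt_add_one x) (hpos x hx)
      (hmono hx hx' (lt_add_one x)) (hdiff x hx)
  have hbase : a + h ∈ Set.Ioi a := lt_add_of_pos_right a hh
  have hbase_pos := hlogDeriv _ hbase
  refine ⟨h / (1 + h * logDeriv ψ (a + h)), by positivity, fun x hx => ?_⟩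
  have hxa : x ∈ Set.Ioi a := hbase.trans hx
  have hxha : x - h ∈ Set.Ioi a := lt_sub_iff_add_lt.2 hx
  have hx_pos := hlogDeriv x hxa
  calc
    h / (1 + h * logDeriv ψ (a + h)) ≤ h / (1 + h * logDeriv ψ x) := by
      gcongr
      exact hanti hbase hxa hx.le
    _ ≤ (ψ x - ψ (x - h)) / deriv ψ x := by
      simpa only [sub_sub_cancel] using
        div_one_add_mul_logDeriv_le_sub_div_deriv hconc hxha hxa (sub_lt_self x hh)
          (hpos _ hxha) (hpos x hxa) (hdiff x hxa) hx_pos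

/-- if ψ ∈ 𝒟 is log-concave then inf_{x>1} (ψ(x) − ψ(x−1))/ψ'(x) > 0. -/
theorem stmt19 (ψ : ℝ → ℝ) (hψ : memD ψ)
    (hlc : AntitoneOn (fun x => deriv ψ x / ψ x) (Set.Ioi 0)) :
    ∃ δ > (0:ℝ), ∀ x : ℝ, 1 < x → δ ≤ (ψ x - ψ (x - 1)) / deriv ψ x := by
  obtain ⟨hmono, hpos, hdiff, -⟩ := hψ
  simpa only [zero_add] using stmt19_general one_pos hmono hpos hdiff hlc
end
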